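/- For every m ≥ 1 there exists a constant C > 0 such that for every h ≥ 1 and every context-free grammar in Chomsky normal form with h variables over a terminal alphabet Σ of m letters, there exists a deterministic finite automaton over Σ with at most 2^{C·h²} states that is Parikh equivalent to the grammar. -/

import Mathlib

/-- A context-free grammar is in Chomsky normal form if every production has one of the
forms `B → CD` (with `C, D` different from the start variable), `B → a`, or `S → ε`. -/
def IsCNF {T : Type*} (G : ContextFreeGrammar T) : Prop :=
  ∀ r ∈ G.rules,
    (∃ a : T, r.output = [Symbol.terminal a]) ∨
    (∃ C D : G.NT, C ≠ G.initial ∧ D ≠ G.initial ∧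
      r.output = [Symbol.nonterminal C, Symbol.nonterminal D]) ∨
    (r.input = G.initial ∧ r.output = [])

/-- The Parikh map `ψ : (Fin m)^* → ℕ^m`, counting for each letter its number of
occurrences in the word. -/
def parikh {m : ℕ} (w : List (Fin m)) : Fin m → ℕ := fun i => w.count i

/-- The Parikh image `ψ(L)` of a language over the alphabet `Fin m`. -/
def parikhImage {m : ℕ} (L : Language (Fin m)) : Set (Fin m → ℕ) :=
  parikh '' L

set_option linter.all false

namespace PK


abbrev Vec (m : ℕ) := Fin m → ℕ

def nrm {m : ℕ} (v : Vec m) : ℕ := ∑ i, v i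

lemma nrm_add {m : ℕ} (v w : Vec m) : nrm (v + w) = nrm v + nrm w := by
  simp [nrm, Finset.sum_add_distrib]

lemma nrm_zero {m : ℕ} : nrm (0 : Vec m) = 0 := by simp [nrm]

lemma nrm_smul {m : ℕ} (k : ℕ) (v : Vec m) : nrm (k • v) = k * nrm v := by
  simp [nrm, Finset.mul_sum]

lemma nrm_single {m : ℕ} (a : Fin m) (k : ℕ) : nrm (Pi.single a k : Vec m) = k := by
  simp [nrm]

lemma le_nrm {m : ℕ} (v : Vec m) (i : Fin m) : v i ≤ nrm v :=
  Finset.single_le_sum (f := v) (fun _ _ => Nat.zero_le _) (Finset.mem_univ i)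

lemma nrm_eq_zero {m : ℕ} {v : Vec m} (h : nrm v = 0) : v = 0 := by
  funext i
  have := le_nrm v i
  simp; omega

/-- Derivation trees; `leaf A none` is a marked leaf (the foot of a pump). -/
inductive PT (N : Type*) (m : ℕ)
  | leaf (A : N) (x : Option (Fin m)) : PT N m
  | node (A : N) (l r : PT N m) : PT N m

namespace PT
variable {N : Type*} {m : ℕ}

def root : PT N m → N
  | leaf A _ => A
  | node A _ _ => A

def size : PT N m → ℕ
  | leaf _ _ => 1
  | node _ l r => size l + size r

def marks : PT N m → ℕ
  | leaf _ none => 1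
  | leaf _ (some _) => 0
  | node _ l r => marks l + marks r

def tv : PT N m → Vec m
  | leaf _ none => 0
  | leaf _ (some a) => Pi.single a 1
  | node _ l r => tv l + tv r

def vars [DecidableEq N] : PT N m → Finset (Option N)
  | leaf _ none => {none}
  | leaf A (some _) => {some A}
  | node A l r => insert (some A) (vars l ∪ vars r)

def Valid (r1 : N → Fin m → Prop) (r2 : N → N → N → Prop) (X : N) : PT N m → Prop
  | leaf A none => A = X
  | leaf A (some a) => r1 A a
  | node A l r => r2 A l.root r.root ∧ Valid r1 r2 X l ∧ Valid r1 r2 X r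

/-- substitute the tree `s` for the marks -/
def subst : PT N m → PT N m → PT N m
  | leaf _ none, s => s
  | leaf A (some a), _ => leaf A (some a)
  | node A l r, s => node A (subst l s) (subst r s)

lemma size_pos (t : PT N m) : 1 ≤ t.size := by
  induction t with
  | leaf => simp [size]
  | node A l r ihl ihr => simp [size]; omega

lemma nrm_tv (t : PT N m) : nrm t.tv + t.marks = t.size := by
  induction t with
  | leaf A x => cases x <;> simp [size, tv, marks, nrm_zero, nrm_single]
  | node A l r ihl ihr => simp [size, tv, marks, nrm_add]; omega

lemma none_mem_vars [DecidableEq N] (t : PT N m) : none ∈ t.vars ↔ 1 ≤ t.marks := by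
  induction t with
  | leaf A x => cases x <;> simp [vars, marks]
  | node A l r ihl ihr => simp [vars, marks, ihl, ihr]; omega

lemma subst_tv (s t : PT N m) : (t.subst s).tv = t.tv + t.marks • s.tv := by
  induction t with
  | leaf A x => cases x <;> simp [subst, tv, marks]
  | node A l r ihl ihr => simp [subst, tv, marks, ihl, ihr, add_smul]; abel

lemma subst_marks (s t : PT N m) : (t.subst s).marks = t.marks * s.marks := by
  induction t with
  | leaf A x => cases x <;> simp [subst, marks]
  | node A l r ihl ihr => simp [subst, marks, ihl, ihr, add_mul]

lemma subst_vars [DecidableEq N] (s t : PT N m) (h : 1 ≤ t.marks) : s.vars ⊆ (t.subst s).vars := by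
  induction t with
  | leaf A x => cases x <;> simp [subst, marks] at *
  | node A l r ihl ihr =>
    simp only [subst, vars, marks] at *
    intro x hx
    simp only [Finset.mem_insert, Finset.mem_union]
    by_cases h1 : 1 ≤ l.marks
    · exact Or.inr (Or.inl (ihl h1 hx))
    · exact Or.inr (Or.inr (ihr (by omega) hx))

lemma subst_root (s t : PT N m) {r1 r2} (X : N) (h : Valid r1 r2 X t) (hs : s.root = X) :
    (t.subst s).root = t.root := by
  cases t with
  | leaf A x =>
    cases x
    · exact hs.trans (Eq.symm h)
    · rfl
  | node A l r => rfl

lemma subst_valid (s t : PT N m) {r1 r2} (X Y : N) (h : Valid r1 r2 X t) (hs : s.root = X)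
    (hv : Valid r1 r2 Y s) : Valid r1 r2 Y (t.subst s) := by
  induction t with
  | leaf A x =>
    cases x
    · exact hv
    · exact h
  | node A l r ihl ihr =>
    obtain ⟨h1, h2, h3⟩ := h
    refine ⟨?_, ihl h2, ihr h3⟩
    rw [subst_root s l X h2 hs, subst_root s r X h3 hs]
    exact h1

end PT

inductive Ctx (N : Type*) (m : ℕ)
  | hole : Ctx N m
  | left (A : N) (c : Ctx N m) (r : PT N m) : Ctx N m
  | right (A : N) (l : PT N m) (c : Ctx N m) : Ctx N m

namespace Ctx
variable {N : Type*} {m : ℕ}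
open PT

def plug : Ctx N m → PT N m → PT N m
  | hole, s => s
  | left A c r, s => node A (plug c s) r
  | right A l c, s => node A l (plug c s)

def cv : Ctx N m → Vec m
  | hole => 0
  | left _ c r => cv c + r.tv
  | right _ l c => l.tv + cv c

def cmarks : Ctx N m → ℕ
  | hole => 0
  | left _ c r => cmarks c + r.marks
  | right _ l c => l.marks + cmarks c

def csize : Ctx N m → ℕ
  | hole => 0
  | left _ c r => csize c + r.size
  | right _ l c => l.size + csize c

def cvars [DecidableEq N] : Ctx N m → Finset (Option N)
  | hole => ∅
  | left A c r => insert (some A) (cvars c ∪ r.vars)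
  | right A l c => insert (some A) (l.vars ∪ cvars c)

lemma plug_tv (c : Ctx N m) (s) : (c.plug s).tv = c.cv + s.tv := by
  induction c with
  | hole => simp [plug, cv]
  | left A c r ih => simp [plug, cv, PT.tv, ih]; abel
  | right A l c ih => simp [plug, cv, PT.tv, ih]; abel

lemma plug_marks (c : Ctx N m) (s) : (c.plug s).marks = c.cmarks + s.marks := by
  induction c with
  | hole => simp [plug, cmarks]
  | left A c r ih => simp [plug, cmarks, PT.marks, ih]; omega
  | right A l c ih => simp [plug, cmarks, PT.marks, ih]; omega

lemma plug_size (c : Ctx N m) (s) : (c.plug s).size = c.csize + s.size := by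
  induction c with
  | hole => simp [plug, csize]
  | left A c r ih => simp [plug, csize, PT.size, ih]; omega
  | right A l c ih => simp [plug, csize, PT.size, ih]; omega

lemma plug_vars [DecidableEq N] (c : Ctx N m) (s) : (c.plug s).vars = c.cvars ∪ s.vars := by
  induction c with
  | hole => simp [plug, cvars]
  | left A c r ih => ext x; simp [plug, cvars, PT.vars, ih]; tauto
  | right A l c ih => ext x; simp [plug, cvars, PT.vars, ih]

lemma csize_pos (c : Ctx N m) (h : c ≠ hole) : 1 ≤ c.csize := by
  cases c with
  | hole => simp at h
  | left A c r => have := r.size_pos; simp only [csize]; omega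
  | right A l c => have := l.size_pos; simp only [csize]; omega

lemma plug_root (c : Ctx N m) (s s' : PT N m) (h : s.root = s'.root) :
    (c.plug s).root = (c.plug s').root := by
  cases c
  · exact h
  · rfl
  · rfl

lemma valid_sub (c : Ctx N m) (s) {r1 r2} (X : N) (h : Valid r1 r2 X (c.plug s)) :
    Valid r1 r2 X s := by
  induction c with
  | hole => exact h
  | left A c r ih => exact ih h.2.1
  | right A l c ih => exact ih h.2.2

lemma valid_of_marks {r1 r2} (X Y : N) (t : PT N m) (h : Valid r1 r2 X t)
    (hc : t.marks = 0 ∨ X = Y) : Valid r1 r2 Y t := by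
  induction t with
  | leaf A x => cases x <;> simp_all [marks, Valid]
  | node A l r ihl ihr =>
    refine ⟨h.1, ihl h.2.1 ?_, ihr h.2.2 ?_⟩ <;>
    · rcases hc with hc | hc
      · simp [marks] at hc; tauto
      · exact Or.inr hc

lemma valid_replace (c : Ctx N m) (s s') {r1 r2} (X Y : N) (h : Valid r1 r2 X (c.plug s))
    (hr : s'.root = s.root) (hs : Valid r1 r2 Y s') (hc : c.cmarks = 0 ∨ X = Y) :
    Valid r1 r2 Y (c.plug s') := by
  induction c with
  | hole => exact hs
  | left A c r ih =>
    have hc1 : c.cmarks = 0 ∨ X = Y := by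
      rcases hc with hc | hc
      · simp [cmarks] at hc; tauto
      · exact Or.inr hc
    have hc2 : r.marks = 0 ∨ X = Y := by
      rcases hc with hc | hc
      · simp [cmarks] at hc; tauto
      · exact Or.inr hc
    refine ⟨?_, ih h.2.1 hc1, valid_of_marks X Y r h.2.2 hc2⟩
    rw [plug_root c s' s hr]; exact h.1
  | right A l c ih =>
    have hc1 : c.cmarks = 0 ∨ X = Y := by
      rcases hc with hc | hc
      · simp [cmarks] at hc; tauto
      · exact Or.inr hc
    have hc2 : l.marks = 0 ∨ X = Y := by
      rcases hc with hc | hc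
      · simp [cmarks] at hc; tauto
      · exact Or.inr hc
    refine ⟨?_, valid_of_marks X Y l h.2.1 hc2, ih h.2.2 hc1⟩
    rw [plug_root c s' s hr]; exact h.1

lemma exists_plug [DecidableEq N] (t : PT N m) (B : N) (h : some B ∈ t.vars) :
    ∃ (d : Ctx N m) (s : PT N m), t = d.plug s ∧ s.root = B := by
  induction t with
  | leaf A x =>
    cases x
    · simp [vars] at h
    · simp [vars] at h; exact ⟨hole, _, rfl, h.symm⟩
  | node A l r ihl ihr =>
    simp only [vars, Finset.mem_insert, Finset.mem_union] at h
    rcases h with h | h | h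
    · exact ⟨hole, _, rfl, by simpa [root] using h.symm⟩
    · obtain ⟨d, s, h1, h2⟩ := ihl h
      exact ⟨left A d r, s, by simp [plug, ← h1], h2⟩
    · obtain ⟨d, s, h1, h2⟩ := ihr h
      exact ⟨right A l d, s, by simp [plug, ← h1], h2⟩

end Ctx

section Irr
variable {N : Type*} {m : ℕ} [DecidableEq N]
open PT Ctx

/-- no pump can be removed without losing something of `W` -/
def Irr (W : Finset (Option N)) (t : PT N m) : Prop :=
  ∀ (d c : Ctx N m) (s : PT N m), t = d.plug (c.plug s) → c ≠ hole → (c.plug s).root = s.root →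
    ¬ W ⊆ (d.plug s).vars

open Classical in
noncomputable def heads [Fintype N] (W : Finset (Option N)) (t : PT N m) : Finset N :=
  Finset.univ.filter (fun B => ∃ (d : Ctx N m) (s : PT N m), t = d.plug s ∧ s.root = B ∧ W ⊆ s.vars)

lemma child_bound [Fintype N] (W W1 : Finset (Option N)) (t l : PT N m) (e : Ctx N m)
    (he : t = e.plug l) (hne : e ≠ hole)
    (hW : W ⊆ t.vars) (hirr : Irr W t) (hW1 : W1 ⊆ W) :
    Fintype.card N * W1.card + (heads W1 l).card + 1 ≤
      Fintype.card N * W.card + (heads W t).card := by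
  classical
  have hroot : t.root ∈ heads W t := by
    simp only [heads, Finset.mem_filter, Finset.mem_univ, true_and]
    exact ⟨hole, t, rfl, rfl, hW⟩
  by_cases h : W1 = W
  · subst h
    have : heads W1 l ⊂ heads W1 t := by
      rw [Finset.ssubset_iff_of_subset]
      · refine ⟨t.root, hroot, ?_⟩
        simp only [heads, Finset.mem_filter, Finset.mem_univ, true_and]
        rintro ⟨d, s, h1, h2, h3⟩
        -- compose e and d
        have key : ∃ c : Ctx N m, c ≠ hole ∧ ∀ s, e.plug (d.plug s) = c.plug s := by
          clear h1 h2 h3 hirr hroot hW he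
          induction e with
          | hole => exact absurd rfl hne
          | left A c r ih =>
            by_cases hc : c = hole
            · subst hc; exact ⟨left A d r, by simp, fun s => rfl⟩
            · obtain ⟨c', h1, h2⟩ := ih hc
              exact ⟨left A c' r, by simp, fun s => by simp [plug, h2]⟩
          | right A r c ih =>
            by_cases hc : c = hole
            · subst hc; exact ⟨right A r d, by simp, fun s => rfl⟩
            · obtain ⟨c', h1, h2⟩ := ih hc
              exact ⟨right A r c', by simp, fun s => by simp [plug, h2]⟩
        obtain ⟨c, hc, hcs⟩ := key
        have ht : t = c.plug s := by rw [he, h1, hcs]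
        exact hirr hole c s (by simpa [plug] using ht) hc (by rw [← ht, h2]) h3
      · intro B hB
        simp only [heads, Finset.mem_filter, Finset.mem_univ, true_and] at hB ⊢
        obtain ⟨d, s, h1, h2, h3⟩ := hB
        have key : ∃ c : Ctx N m, ∀ s, e.plug (d.plug s) = c.plug s := by
          clear h1 h2 h3 hirr hroot hW he hne
          induction e with
          | hole => exact ⟨d, fun s => rfl⟩
          | left A c r ih =>
            obtain ⟨c', h2⟩ := ih
            exact ⟨left A c' r, fun s => by simp [plug, h2]⟩
          | right A r c ih =>
            obtain ⟨c', h2⟩ := ih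
            exact ⟨right A r c', fun s => by simp [plug, h2]⟩
        obtain ⟨c, hcs⟩ := key
        exact ⟨c, s, by rw [he, h1, hcs], h2, h3⟩
    have := Finset.card_lt_card this
    omega
  · have h1 : W1.card < W.card := Finset.card_lt_card (Finset.ssubset_iff_subset_ne.2 ⟨hW1, h⟩)
    have h2 : (heads W1 l).card ≤ Fintype.card N := Finset.card_le_univ _
    have h3 : 1 ≤ (heads W t).card := Finset.card_pos.2 ⟨_, hroot⟩
    have h4 : Fintype.card N * (W1.card + 1) ≤ Fintype.card N * W.card :=
      Nat.mul_le_mul_left _ h1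
    rw [mul_add] at h4
    omega

lemma size_le [Fintype N] (t : PT N m) : ∀ W : Finset (Option N), W ⊆ t.vars → Irr W t →
    t.size ≤ 2 ^ (Fintype.card N * W.card + (heads W t).card) := by
  induction t with
  | leaf A x => intro W _ _; simp [size]; exact Nat.one_le_two_pow
  | node A l r ihl ihr =>
    intro W hW hirr
    have hl : l.size * 2 ≤ 2 ^ (Fintype.card N * W.card + (heads W (node A l r)).card) := by
      have hsub : (W \ insert (some A) r.vars) ⊆ l.vars := by
        intro x hx
        simp only [Finset.mem_sdiff, Finset.mem_insert, not_or] at hx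
        have := hW hx.1
        simp only [vars, Finset.mem_insert, Finset.mem_union] at this
        tauto
      have h1 := ihl (W \ insert (some A) r.vars) hsub (by
        intro d c s h1 h2 h3 h4
        refine hirr (left A d r) c s (by simp [plug, h1]) h2 h3 ?_
        intro x hx
        simp only [plug, vars, Finset.mem_insert, Finset.mem_union]
        by_cases hxx : x ∈ insert (some A) r.vars
        · simp only [Finset.mem_insert] at hxx; tauto
        · exact Or.inr (Or.inl (h4 (Finset.mem_sdiff.2 ⟨hx, hxx⟩))))
      have h2 := child_bound W (W \ insert (some A) r.vars) (node A l r) l (left A hole r) rfl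
        (by simp) hW hirr Finset.sdiff_subset
      calc _ ≤ 2 ^ _ * 2 := Nat.mul_le_mul_right _ h1
        _ = 2 ^ (_ + 1) := (pow_succ _ _).symm
        _ ≤ _ := Nat.pow_le_pow_right (by norm_num) h2
    have hr : r.size * 2 ≤ 2 ^ (Fintype.card N * W.card + (heads W (node A l r)).card) := by
      have hsub : (W \ insert (some A) l.vars) ⊆ r.vars := by
        intro x hx
        simp only [Finset.mem_sdiff, Finset.mem_insert, not_or] at hx
        have := hW hx.1
        simp only [vars, Finset.mem_insert, Finset.mem_union] at this
        tauto
      have h1 := ihr (W \ insert (some A) l.vars) hsub (by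
        intro d c s h1 h2 h3 h4
        refine hirr (right A l d) c s (by simp [plug, h1]) h2 h3 ?_
        intro x hx
        simp only [plug, vars, Finset.mem_insert, Finset.mem_union]
        by_cases hxx : x ∈ insert (some A) l.vars
        · simp only [Finset.mem_insert] at hxx; tauto
        · exact Or.inr (Or.inr (h4 (Finset.mem_sdiff.2 ⟨hx, hxx⟩))))
      have h2 := child_bound W (W \ insert (some A) l.vars) (node A l r) r (right A l hole) rfl
        (by simp) hW hirr Finset.sdiff_subset
      calc _ ≤ 2 ^ _ * 2 := Nat.mul_le_mul_right _ h1
        _ = 2 ^ (_ + 1) := (pow_succ _ _).symm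
        _ ≤ _ := Nat.pow_le_pow_right (by norm_num) h2
    simp only [size]
    omega

/-- pumps, as marked trees -/
def IsPump (r1 : N → Fin m → Prop) (r2 : N → N → N → Prop) (X : N) (M : PT N m) : Prop :=
  M.root = X ∧ M.marks = 1 ∧ 2 ≤ M.size ∧ Valid r1 r2 X M

def Pumps (r1 : N → Fin m → Prop) (r2 : N → N → N → Prop) (D : ℕ) (X : N) : Set (Vec m) :=
  {β | nrm β ≤ D ∧ ∃ M, IsPump r1 r2 X M ∧ M.tv = β}

def PumpsOn (r1 : N → Fin m → Prop) (r2 : N → N → N → Prop) (D : ℕ) (W : Finset (Option N)) :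
    Set (Vec m) :=
  {β | ∃ X, some X ∈ W ∧ β ∈ Pumps r1 r2 D X}

lemma PumpsOn_mono (r1 : N → Fin m → Prop) (r2 : N → N → N → Prop) (D : ℕ)
    {W W' : Finset (Option N)} (h : ∀ X, some X ∈ W → some X ∈ W') :
    PumpsOn r1 r2 D W ⊆ PumpsOn r1 r2 D W' := by
  rintro β ⟨X, h1, h2⟩
  exact ⟨X, h _ h1, h2⟩

lemma ctx_pump {r1 : N → Fin m → Prop} {r2 : N → N → N → Prop} {X : N} {c : Ctx N m} {s : PT N m}
    (hv : Valid r1 r2 X (c.plug s)) (hc : c ≠ hole) (hm : c.cmarks = 0)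
    (hr : (c.plug s).root = s.root) :
    IsPump r1 r2 s.root (c.plug (leaf s.root none)) := by
  refine ⟨?_, ?_, ?_, ?_⟩
  · exact (plug_root c (leaf s.root none) s rfl).trans hr
  · simp [plug_marks, hm, marks]
  · have := csize_pos c hc; simp [plug_size, size]; omega
  · exact valid_replace c s _ X _ hv rfl rfl (Or.inl hm)

lemma pump_decomp [Fintype N] (r1 : N → Fin m → Prop) (r2 : N → N → N → Prop) (n : ℕ) :
    ∀ (X : N) (M : PT N m), M.size ≤ n → IsPump r1 r2 X M →
      M.tv ∈ AddSubmonoid.closure (PumpsOn r1 r2 (2 ^ (2 * Fintype.card N + 1)) M.vars) := by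
  induction n with
  | zero =>
    intro X M h; have := M.size_pos; omega
  | succ n ih =>
    intro X M hn hM
    by_cases hred : ∃ (d c : Ctx N m) (s : PT N m), M = d.plug (c.plug s) ∧ c ≠ hole ∧
        (c.plug s).root = s.root ∧ none ∈ (d.plug s).vars ∧ 2 ≤ (d.plug s).size
    · obtain ⟨d, c, s, h1, h2, h3, h4, h5⟩ := hred
      obtain ⟨hM1, hM2, hM3, hM4⟩ := hM
      have hmk : (d.plug s).marks = 1 ∧ c.cmarks = 0 := by
        rw [none_mem_vars] at h4
        rw [h1] at hM2
        simp only [plug_marks] at hM2 h4 ⊢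
        omega
      have hsz := csize_pos c h2
      have hs1 := s.size_pos
      have hS : M.size = d.csize + (c.csize + s.size) := by rw [h1, plug_size, plug_size]
      rw [plug_size] at h5
      rw [h1] at hM4
      have a1 := ih X (d.plug s) (by rw [plug_size]; omega) ⟨by
          rw [plug_root d s (c.plug s) h3.symm, ← h1, hM1], hmk.1, by rw [plug_size]; omega,
          valid_replace d (c.plug s) s X X hM4 h3.symm
            (valid_sub _ _ _ (valid_sub _ _ _ hM4)) (Or.inr rfl)⟩
      have a2 := ih s.root (c.plug (leaf s.root none)) (by rw [plug_size]; simp [size]; omega)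
        (ctx_pump (valid_sub _ _ _ hM4) h2 hmk.2 h3)
      have e : M.tv = (d.plug s).tv + (c.plug (leaf s.root none)).tv := by
        rw [h1]; simp only [plug_tv, tv]; abel
      rw [e]
      refine add_mem (AddSubmonoid.closure_mono (PumpsOn_mono _ _ _ ?_) a1)
        (AddSubmonoid.closure_mono (PumpsOn_mono _ _ _ ?_) a2)
      · intro Y hY; rw [h1]; simp only [plug_vars, Finset.mem_union] at hY ⊢; tauto
      · intro Y hY; rw [h1]; simp only [plug_vars, Finset.mem_union, vars, Finset.mem_singleton] at hY ⊢
        simp at hY; tauto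
    · apply AddSubmonoid.subset_closure
      refine ⟨X, ?_, ?_, M, hM, rfl⟩
      · obtain ⟨hM1, hM2, hM3, hM4⟩ := hM
        cases M with
        | leaf A x => simp [size] at hM3
        | node A l r => simp [root] at hM1; simp [vars, hM1]
      · have hb := nrm_tv M
        suffices M.size ≤ 2 ^ (2 * Fintype.card N + 1) by omega
        obtain ⟨hM1, hM2, hM3, hM4⟩ := hM
        push Not at hred
        cases M with
        | leaf A x => simp [size] at hM3
        | node A l r =>
          have hcard : ∀ (W : Finset (Option N)) (t : PT N m), W ⊆ {none} → W ⊆ t.vars → Irr W t →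
              t.size ≤ 2 ^ (2 * Fintype.card N) := by
            intro W t h1 h2 h3
            refine (size_le t W h2 h3).trans (Nat.pow_le_pow_right (by norm_num) ?_)
            have := Finset.card_le_card h1
            simp at this
            have h4 : (heads W t).card ≤ Fintype.card N := Finset.card_le_univ _
            nlinarith
          have hone : 1 ≤ l.marks ∨ 1 ≤ r.marks := by simp [marks] at hM2; omega
          have hl2 : l.size ≤ 2 ^ (2 * Fintype.card N) := by
            rcases hone with h | h
            · refine hcard {none} l (by simp) (by simpa [none_mem_vars] using h) ?_
              intro d c s h1 h2 h3 h4
              have := hred (left A d r) c s (by simp [plug, h1]) h2 h3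
                (by simp [plug, vars] at h4 ⊢; tauto)
              have b1 := (d.plug s).size_pos
              have b2 := r.size_pos
              simp [plug, size] at this; omega
            · refine hcard ∅ l (by simp) (by simp) ?_
              intro d c s h1 h2 h3 h4
              have := hred (left A d r) c s (by simp [plug, h1]) h2 h3
                (by rw [← none_mem_vars] at h; simp [plug, vars] at h4 ⊢; tauto)
              have b1 := (d.plug s).size_pos
              have b2 := r.size_pos
              simp [plug, size] at this; omega
          have hr2 : r.size ≤ 2 ^ (2 * Fintype.card N) := by
            rcases hone with h | h
            · refine hcard ∅ r (by simp) (by simp) ?_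
              intro d c s h1 h2 h3 h4
              have := hred (right A l d) c s (by simp [plug, h1]) h2 h3
                (by rw [← none_mem_vars] at h; simp [plug, vars] at h4 ⊢; tauto)
              have b1 := (d.plug s).size_pos
              have b2 := l.size_pos
              simp [plug, size] at this; omega
            · refine hcard {none} r (by simp) (by simpa [none_mem_vars] using h) ?_
              intro d c s h1 h2 h3 h4
              have := hred (right A l d) c s (by simp [plug, h1]) h2 h3
                (by simp [plug, vars] at h4 ⊢; tauto)
              have b1 := (d.plug s).size_pos
              have b2 := l.size_pos
              simp [plug, size] at this; omega
          simp only [size, pow_succ]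
          omega

/-- plain derivation trees -/
def IsTree (r1 : N → Fin m → Prop) (r2 : N → N → N → Prop) (X : N) (t : PT N m) : Prop :=
  t.root = X ∧ t.marks = 0 ∧ Valid r1 r2 X t

lemma tree_decomp [Fintype N] (r1 : N → Fin m → Prop) (r2 : N → N → N → Prop) (X : N) (n : ℕ) :
    ∀ (t : PT N m), t.size ≤ n → IsTree r1 r2 X t →
      ∃ t0, IsTree r1 r2 X t0 ∧ t0.vars = t.vars ∧
        nrm t0.tv ≤ 2 ^ (Fintype.card N * (Fintype.card N + 1) + Fintype.card N) ∧
        ∃ x ∈ AddSubmonoid.closure (PumpsOn r1 r2 (2 ^ (2 * Fintype.card N + 1)) t.vars),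
          t.tv = t0.tv + x := by
  induction n with
  | zero =>
    intro t h; have := t.size_pos; omega
  | succ n ih =>
    intro t hn ht
    by_cases hirr : Irr t.vars t
    · refine ⟨t, ht, rfl, ?_, 0, zero_mem _, by simp⟩
      have h1 := nrm_tv t
      have h2 := size_le t t.vars (by simp) hirr
      have h3 : t.vars.card ≤ Fintype.card N + 1 := by
        have := Finset.card_le_univ t.vars; simpa using this
      have h4 : (heads t.vars t).card ≤ Fintype.card N := Finset.card_le_univ _
      have h5 : Fintype.card N * t.vars.card + (heads t.vars t).card ≤
        Fintype.card N * (Fintype.card N + 1) + Fintype.card N := by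
          have := Nat.mul_le_mul_left (Fintype.card N) h3
          omega
      have h6 := Nat.pow_le_pow_right (n := 2) (by norm_num) h5
      omega
    · unfold Irr at hirr
      push Not at hirr
      obtain ⟨d, c, s, h1, h2, h3, h4⟩ := hirr
      obtain ⟨ht1, ht2, ht3⟩ := ht
      have hmk : (d.plug s).marks = 0 ∧ c.cmarks = 0 := by
        rw [h1] at ht2
        simp only [plug_marks] at ht2 ⊢
        omega
      have hsz := csize_pos c h2
      have hS : t.size = d.csize + (c.csize + s.size) := by rw [h1, plug_size, plug_size]
      have hvars : (d.plug s).vars = t.vars := by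
        apply Finset.Subset.antisymm _ h4
        rw [h1]; intro x hx; simp only [plug_vars, Finset.mem_union] at hx ⊢; tauto
      rw [h1] at ht3
      obtain ⟨t0, a1, a2, a3, x, hx, a4⟩ := ih (d.plug s) (by rw [plug_size]; omega) ⟨by
          rw [plug_root d s (c.plug s) h3.symm, ← h1, ht1], hmk.1,
          valid_replace d (c.plug s) s X X ht3 h3.symm
            (valid_sub _ _ _ (valid_sub _ _ _ ht3)) (Or.inr rfl)⟩
      have b := pump_decomp r1 r2 _ s.root (c.plug (leaf s.root none)) le_rfl
        (ctx_pump (valid_sub _ _ _ ht3) h2 hmk.2 h3)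
      refine ⟨t0, a1, a2.trans hvars, a3, x + (c.plug (leaf s.root none)).tv,
        add_mem (by rwa [hvars] at hx) (AddSubmonoid.closure_mono (PumpsOn_mono _ _ _ ?_) b), ?_⟩
      · intro Y hY; rw [h1]
        simp only [plug_vars, Finset.mem_union, vars, Finset.mem_singleton] at hY ⊢
        simp at hY; tauto
      · rw [← add_assoc, ← a4, h1]; simp only [plug_tv, tv]; abel

lemma tree_pump (r1 : N → Fin m → Prop) (r2 : N → N → N → Prop) (D : ℕ) (X : N) (W : Finset (Option N))
    (x : Vec m) (hx : x ∈ AddSubmonoid.closure (PumpsOn r1 r2 D W)) :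
    ∀ t, IsTree r1 r2 X t → W ⊆ t.vars → ∃ t', IsTree r1 r2 X t' ∧ W ⊆ t'.vars ∧
      t'.tv = t.tv + x := by
  induction hx using AddSubmonoid.closure_induction with
  | zero => intro t h1 h2; exact ⟨t, h1, h2, by simp⟩
  | add x y _ _ ihx ihy =>
    intro t h1 h2
    obtain ⟨t', a1, a2, a3⟩ := ihx t h1 h2
    obtain ⟨t'', b1, b2, b3⟩ := ihy t' a1 a2
    exact ⟨t'', b1, b2, by rw [b3, a3, add_assoc]⟩
  | mem β hβ =>
    intro t ht hW
    obtain ⟨B, hB, _, M, ⟨m1, m2, m3, m4⟩, rfl⟩ := hβ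
    obtain ⟨d, s, rfl, hs⟩ := exists_plug t B (hW hB)
    obtain ⟨t1, t2, t3⟩ := ht
    have hroot : (M.subst s).root = s.root := by rw [subst_root s M B m4 hs, m1, hs]
    refine ⟨d.plug (M.subst s), ⟨?_, ?_, ?_⟩, ?_, ?_⟩
    · rw [plug_root d _ s hroot, t1]
    · simp [plug_marks, subst_marks, m2] at t2 ⊢; exact t2
    · exact valid_replace d s _ X X t3 hroot (subst_valid s M B X m4 hs (valid_sub _ _ _ t3))
        (Or.inr rfl)
    · refine hW.trans ?_
      rw [plug_vars, plug_vars]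
      exact Finset.union_subset_union le_rfl (subst_vars s M (by omega))
    · rw [plug_tv, plug_tv, subst_tv, m2]; simp; abel

end Irr

section Grammar

lemma parikh_nil {m : ℕ} : parikh ([] : List (Fin m)) = 0 := by
  funext i; simp [parikh]

lemma parikh_append {m : ℕ} (u v : List (Fin m)) : parikh (u ++ v) = parikh u + parikh v := by
  funext i; simp [parikh]

lemma parikh_singleton {m : ℕ} (a : Fin m) : parikh [a] = Pi.single a 1 := by
  funext i
  simp only [parikh, List.count_singleton, Pi.single_apply, beq_iff_eq]
  by_cases h : i = a
  · subst h; simp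
  · simp [h, Ne.symm h]

lemma parikh_cons {m : ℕ} (a : Fin m) (v : List (Fin m)) :
    parikh (a :: v) = Pi.single a 1 + parikh v := by
  rw [← parikh_singleton, ← parikh_append]; rfl

lemma nrm_parikh {m : ℕ} (w : List (Fin m)) : nrm (parikh w) = w.length := by
  induction w with
  | nil => simp [parikh_nil, nrm_zero]
  | cons a w ih => rw [parikh_cons, nrm_add, nrm_single, ih]; simp; omega

variable {m : ℕ} (G : ContextFreeGrammar (Fin m))

def R1 (A : G.NT) (a : Fin m) : Prop := ⟨A, [Symbol.terminal a]⟩ ∈ G.rules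
def R2 (A C D : G.NT) : Prop := ⟨A, [Symbol.nonterminal C, Symbol.nonterminal D]⟩ ∈ G.rules

def Gen (A : G.NT) (v : Vec m) : Prop :=
  (∃ t, IsTree (R1 G) (R2 G) A t ∧ t.tv = v) ∨ (A = G.initial ∧ v = 0)

def Fo : List (Symbol (Fin m) G.NT) → Vec m → Prop
  | [], v => v = 0
  | Symbol.terminal a :: u, v => ∃ v', v = Pi.single a 1 + v' ∧ Fo u v'
  | Symbol.nonterminal A :: u, v => ∃ v1 v2, Gen G A v1 ∧ Fo u v2 ∧ v = v1 + v2

lemma Fo_append (p q : List (Symbol (Fin m) G.NT)) (v : Vec m) :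
    Fo G (p ++ q) v ↔ ∃ v1 v2, Fo G p v1 ∧ Fo G q v2 ∧ v = v1 + v2 := by
  induction p generalizing v with
  | nil => simp [Fo]
  | cons x p ih =>
    cases x with
    | terminal a =>
      simp only [List.cons_append, Fo, ih]
      constructor
      · rintro ⟨v', rfl, v1, v2, h1, h2, rfl⟩
        exact ⟨_, v2, ⟨v1, rfl, h1⟩, h2, by abel⟩
      · rintro ⟨v1, v2, ⟨v', rfl, h1⟩, h2, rfl⟩
        exact ⟨v' + v2, by abel, v', v2, h1, h2, rfl⟩
    | nonterminal A =>
      simp only [List.cons_append, Fo, ih]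
      constructor
      · rintro ⟨w1, w2, h0, ⟨v1, v2, h1, h2, rfl⟩, rfl⟩
        exact ⟨_, v2, ⟨w1, v1, h0, h1, rfl⟩, h2, by abel⟩
      · rintro ⟨v1, v2, ⟨w1, w2, h0, h1, rfl⟩, h2, rfl⟩
        exact ⟨w1, w2 + v2, h0, ⟨w2, v2, h1, h2, rfl⟩, by abel⟩

lemma Fo_terminals (w : List (Fin m)) : Fo G (w.map Symbol.terminal) (parikh w) := by
  induction w with
  | nil => simp [Fo, parikh_nil]
  | cons a w ih => exact ⟨parikh w, parikh_cons a w, ih⟩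

lemma Fo_rule (hG : IsCNF G) (r) (hr : r ∈ G.rules) (v : Vec m) (h : Fo G r.output v) :
    Gen G r.input v := by
  obtain ⟨A, o⟩ := r
  rcases hG _ hr with ⟨a, ha⟩ | ⟨C, D, hC, hD, ho⟩ | ⟨h1, h2⟩
  · simp only at ha; subst ha
    simp only [Fo] at h
    obtain ⟨v', rfl, rfl⟩ := h
    exact Or.inl ⟨PT.leaf A (some a), ⟨rfl, rfl, hr⟩, by simp [PT.tv]⟩
  · simp only at ho; subst ho
    simp only [Fo] at h
    obtain ⟨v1, v2, h1, ⟨v3, v4, h3, rfl, rfl⟩, rfl⟩ := h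
    rcases h1 with ⟨t, ⟨a1, a2, a3⟩, rfl⟩ | h1
    swap
    · exact absurd h1.1 hC
    rcases h3 with ⟨t', ⟨b1, b2, b3⟩, rfl⟩ | h1
    swap
    · exact absurd h1.1 hD
    refine Or.inl ⟨PT.node A t t', ⟨rfl, ?_, ?_, ?_, ?_⟩, ?_⟩
    · simp [PT.marks, a2, b2]
    · rw [a1, b1]; exact hr
    · exact Ctx.valid_of_marks _ _ _ a3 (Or.inl a2)
    · exact Ctx.valid_of_marks _ _ _ b3 (Or.inl b2)
    · simp [PT.tv]
  · simp only at h2; subst h2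
    exact Or.inr ⟨h1, h⟩

lemma Fo_derives (hG : IsCNF G) (u w : List (Symbol (Fin m) G.NT)) (h : G.Derives u w)
    (v : Vec m) (hv : Fo G w v) : Fo G u v := by
  induction h using Relation.ReflTransGen.head_induction_on with
  | refl => exact hv
  | head h1 _ ih =>
    obtain ⟨r, hr, hrw⟩ := h1
    obtain ⟨p, q, rfl, rfl⟩ := hrw.exists_parts
    rw [Fo_append, ] at ih ⊢
    obtain ⟨v1, v2, h1, h2, rfl⟩ := ih
    refine ⟨v1, v2, ?_, h2, rfl⟩
    rw [Fo_append] at h1 ⊢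
    obtain ⟨w1, w2, g1, g2, rfl⟩ := h1
    refine ⟨w1, w2, g1, ?_, rfl⟩
    exact ⟨w2, 0, Fo_rule G hG r hr w2 g2, rfl, by simp⟩

lemma tree_of_word (hG : IsCNF G) (w : List (Fin m)) (h : w ∈ G.language) (h0 : parikh w ≠ 0) :
    ∃ t, IsTree (R1 G) (R2 G) G.initial t ∧ t.tv = parikh w := by
  have := Fo_derives G hG _ _ h _ (Fo_terminals G w)
  simp only [Fo] at this
  obtain ⟨v1, v2, h1, rfl, h2⟩ := this
  rcases h1 with ⟨t, h1, rfl⟩ | h1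
  · exact ⟨t, h1, by simpa using h2.symm⟩
  · simp [h1.2] at h2; contradiction

lemma word_of_tree (t : PT G.NT m) (X) (hm : t.marks = 0) (hv : PT.Valid (R1 G) (R2 G) X t) :
    ∃ w : List (Fin m), parikh w = t.tv ∧
      G.Derives [Symbol.nonterminal t.root] (w.map Symbol.terminal) := by
  induction t with
  | leaf A x =>
    cases x with
    | none => simp [PT.marks] at hm
    | some a =>
      refine ⟨[a], parikh_singleton a, ?_⟩
      have := ContextFreeRule.Rewrites.input_output (r := ⟨A, [Symbol.terminal a]⟩) (T := Fin m) (N := G.NT)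
      exact ContextFreeGrammar.Produces.single ⟨_, hv, this⟩
  | node A l r ihl ihr =>
    simp [PT.marks] at hm
    obtain ⟨h1, h2, h3⟩ := hv
    obtain ⟨u, hu1, hu2⟩ := ihl hm.1 h2
    obtain ⟨w, hw1, hw2⟩ := ihr hm.2 h3
    refine ⟨u ++ w, by rw [parikh_append, hu1, hw1]; rfl, ?_⟩
    have := ContextFreeRule.Rewrites.input_output (T := Fin m) (N := G.NT)
      (r := ⟨A, [Symbol.nonterminal l.root, Symbol.nonterminal r.root]⟩)
    have h0 : G.Derives [Symbol.nonterminal A]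
        [Symbol.nonterminal l.root, Symbol.nonterminal r.root] :=
      ContextFreeGrammar.Produces.single ⟨_, h1, this⟩
    refine h0.trans ?_
    have e1 := hu2.append_right [Symbol.nonterminal r.root]
    have e2 := hw2.append_left (u.map Symbol.terminal)
    rw [List.map_append]
    exact e1.trans e2

/-- The abstract form of Parikh's theorem used below. -/
structure Semi {m : ℕ} (N : Type*) (S : Set (Vec m)) (D N1 : ℕ) where
  pm : N → Set (Vec m)
  base : Finset (Option N) → Vec m → Prop
  pm_le : ∀ X, ∀ β ∈ pm X, nrm β ≤ D
  sound : ∀ W α, base W α → ∀ x ∈ AddSubmonoid.closure {β | ∃ X, some X ∈ W ∧ β ∈ pm X}, α + x ∈ S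
  complete : ∀ v ∈ S, v ≠ 0 → ∃ W α x, base W α ∧ nrm α ≤ N1 ∧
    x ∈ AddSubmonoid.closure {β | ∃ X, some X ∈ W ∧ β ∈ pm X} ∧ v = α + x

open Classical in
noncomputable def semiOfGrammar [Fintype G.NT] (hG : IsCNF G) :
    Semi G.NT (parikhImage G.language) (2 ^ (2 * Fintype.card G.NT + 1))
      (2 ^ (Fintype.card G.NT * (Fintype.card G.NT + 1) + Fintype.card G.NT)) where
  pm := Pumps (R1 G) (R2 G) (2 ^ (2 * Fintype.card G.NT + 1))
  base W α := ∃ t, IsTree (R1 G) (R2 G) G.initial t ∧ t.vars = W ∧ t.tv = α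
  pm_le X β h := h.1
  sound := by
    rintro W α ⟨t, ht, rfl, rfl⟩ x hx
    obtain ⟨t', ⟨h1, h2, h3⟩, _, h4⟩ := tree_pump (R1 G) (R2 G) _ G.initial _ x hx t ht le_rfl
    obtain ⟨w, hw1, hw2⟩ := word_of_tree G t' _ h2 h3
    refine ⟨w, ?_, by rw [hw1, h4]⟩
    rw [h1] at hw2
    exact hw2
  complete := by
    rintro v ⟨w, hw, rfl⟩ hv
    obtain ⟨t, ht, htv⟩ := tree_of_word G hG w hw hv
    obtain ⟨t0, h1, h2, h3, x, hx, h4⟩ := tree_decomp (R1 G) (R2 G) G.initial _ t le_rfl ht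
    exact ⟨t.vars, t0.tv, x, ⟨t0, h1, h2, rfl⟩, h3, hx, by rw [← h4, htv]⟩

end Grammar

section Types
variable {m : ℕ}

lemma carath_step (F I J : Finset (Vec m)) (hI : I ⊆ F) (hJ : J ⊆ F) (hIJ : Disjoint I J)
    (hne : I.Nonempty) (hs : ∑ β ∈ I, β = ∑ β ∈ J, β) (n : Vec m → ℕ) :
    ∃ β0 ∈ F, ∃ n' : Vec m → ℕ, ∑ β ∈ F.erase β0, n' β • β = ∑ β ∈ F, n β • β := by
  obtain ⟨β0, h0, hmin⟩ := Finset.exists_min_image I n hne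
  have hF := hI h0
  let n' : Vec m → ℕ := fun β => if β ∈ I then n β - n β0 else if β ∈ J then n β + n β0 else n β
  refine ⟨β0, hF, n', ?_⟩
  have e1 : ∑ β ∈ F.erase β0, n' β • β = ∑ β ∈ F, n' β • β := by
    rw [← Finset.add_sum_erase _ _ hF]
    simp [n', h0]
  have e2 : ∑ β ∈ F, n' β • β + n β0 • ∑ β ∈ I, β = ∑ β ∈ F, n β • β + n β0 • ∑ β ∈ J, β := by
    have a1 : ∑ β ∈ I, β = ∑ β ∈ F, if β ∈ I then β else 0 := by
      rw [← Finset.sum_filter, Finset.filter_mem_eq_inter, Finset.inter_eq_right.2 hI]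
    have a2 : ∑ β ∈ J, β = ∑ β ∈ F, if β ∈ J then β else 0 := by
      rw [← Finset.sum_filter, Finset.filter_mem_eq_inter, Finset.inter_eq_right.2 hJ]
    rw [a1, a2, Finset.smul_sum, Finset.smul_sum, ← Finset.sum_add_distrib,
      ← Finset.sum_add_distrib]
    apply Finset.sum_congr rfl
    intro β hβ
    by_cases h1 : β ∈ I
    · have h2 : β ∉ J := Finset.disjoint_left.1 hIJ h1
      have h3 := hmin β h1
      simp only [n', h1, h2, if_true, if_false, smul_zero, add_zero]
      rw [← add_smul, Nat.sub_add_cancel h3]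
    · by_cases h2 : β ∈ J
      · simp only [n', h1, h2, if_true, if_false, smul_zero, add_zero]
        rw [← add_smul]
      · simp [n', h1, h2]
  rw [e1]
  rw [hs] at e2
  exact add_right_cancel e2

lemma carath_aux (D R : ℕ) (hR : (R * D + 1) ^ m < 2 ^ R) (k : ℕ) :
    ∀ (F : Finset (Vec m)) (n : Vec m → ℕ), F.card ≤ k → (∀ β ∈ F, nrm β ≤ D) →
    ∃ F' ⊆ F, F'.card ≤ R ∧ ∃ n' : Vec m → ℕ, ∑ β ∈ F', n' β • β = ∑ β ∈ F, n β • β := by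
  induction k with
  | zero =>
    intro F n h1 h2
    exact ⟨F, le_rfl, by omega, n, rfl⟩
  | succ k ih =>
    intro F n h1 h2
    by_cases hc : F.card ≤ R
    · exact ⟨F, le_rfl, hc, n, rfl⟩
    obtain ⟨F0, hF0, hcard⟩ := Finset.exists_subset_card_eq (show R ≤ F.card by omega)
    obtain ⟨I, hI, J, hJ, hne, hs⟩ := Finset.exists_ne_map_eq_of_card_lt_of_maps_to
      (s := F0.powerset) (t := Fintype.piFinset (fun _ : Fin m => Finset.range (R * D + 1)))
      (f := fun I => ∑ β ∈ I, β) (by simpa [hcard] using hR) (by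
        intro I hI
        simp only [Finset.coe_powerset, Set.mem_preimage, Set.mem_powerset_iff, Finset.coe_subset] at hI
        simp only [Finset.mem_coe, Fintype.mem_piFinset, Finset.mem_range]
        intro i
        rw [Finset.sum_apply]
        have : ∑ β ∈ I, β i ≤ I.card * D := by
          rw [← smul_eq_mul]
          exact Finset.sum_le_card_nsmul _ _ _ fun β hβ => (le_nrm β i).trans (h2 β (hF0 (hI hβ)))
        have h3 : I.card ≤ R := hcard ▸ Finset.card_le_card hI
        have := Nat.mul_le_mul_right D h3
        omega)
    simp only [Finset.mem_powerset] at hI hJ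
    have hs' : ∑ β ∈ I \ J, β = ∑ β ∈ J \ I, β := by
      have a1 := Finset.sum_inter_add_sum_sdiff I J (fun β => β)
      have a2 := Finset.sum_inter_add_sum_sdiff J I (fun β => β)
      rw [Finset.inter_comm] at a2
      have hs2 : ∑ β ∈ I, β = ∑ β ∈ J, β := hs
      rw [← a1, ← a2] at hs2
      exact add_left_cancel hs2
    have key : ∃ β0 ∈ F, ∃ n' : Vec m → ℕ, ∑ β ∈ F.erase β0, n' β • β = ∑ β ∈ F, n β • β := by
      by_cases h : (I \ J).Nonempty
      · exact carath_step F (I \ J) (J \ I) (Finset.sdiff_subset.trans (hI.trans hF0))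
          (Finset.sdiff_subset.trans (hJ.trans hF0)) disjoint_sdiff_sdiff h hs' n
      · have h' : (J \ I).Nonempty := by
          by_contra h'
          rw [Finset.not_nonempty_iff_eq_empty, Finset.sdiff_eq_empty_iff_subset] at h h'
          exact hne (Finset.Subset.antisymm h h')
        exact carath_step F (J \ I) (I \ J) (Finset.sdiff_subset.trans (hJ.trans hF0))
          (Finset.sdiff_subset.trans (hI.trans hF0)) disjoint_sdiff_sdiff h' hs'.symm n
    obtain ⟨β0, hβ0, n', hn'⟩ := key
    obtain ⟨F', a1, a2, n'', a3⟩ := ih (F.erase β0) n' (by rw [Finset.card_erase_of_mem hβ0]; omega)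
      (fun β hβ => h2 β (Finset.mem_of_mem_erase hβ))
    exact ⟨F', a1.trans (Finset.erase_subset _ _), a2, n'', a3.trans hn'⟩

lemma carath (Q : Set (Vec m)) (D R : ℕ) (hQ : ∀ β ∈ Q, nrm β ≤ D) (hR : (R * D + 1) ^ m < 2 ^ R)
    (x : Vec m) (hx : x ∈ AddSubmonoid.closure Q) :
    ∃ (f : Fin R → Vec m) (n : Fin R → ℕ), (∀ i, f i = 0 ∨ f i ∈ Q) ∧ x = ∑ i, n i • f i := by
  obtain ⟨n, F, hF, -, rfl⟩ := AddSubmonoid.mem_closure_iff_exists_finset_subset.1 hx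
  obtain ⟨F', h1, h2, n', h3⟩ := carath_aux D R hR _ F n le_rfl (fun β hβ => hQ β (hF hβ))
  rw [← h3]
  let l := F'.toList ++ List.replicate (R - F'.card) (0 : Vec m)
  have hl : l.length = R := by simp [l]; omega
  refine ⟨fun i => l.get (i.cast hl.symm), fun i => n' (l.get (i.cast hl.symm)), ?_, ?_⟩
  · intro i
    have : l.get (i.cast hl.symm) ∈ l := List.get_mem _ _
    simp only [l, List.mem_append, Finset.mem_toList, List.mem_replicate] at this
    rcases this with h | h
    · exact Or.inr (hF (h1 h))
    · exact Or.inl h.2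
  · have e : ∑ i : Fin R, n' (l.get (i.cast hl.symm)) • l.get (i.cast hl.symm) =
        ∑ i : Fin l.length, n' (l.get i) • l.get i :=
      Fintype.sum_equiv (finCongr hl.symm) _ _ (fun i => rfl)
    rw [e]
    have e2 : ∑ i : Fin l.length, n' (l.get i) • l.get i = (l.map (fun β => n' β • β)).sum := by
      rw [← List.sum_ofFn]
      congr 1
      conv_rhs => rw [← List.ofFn_get l, List.map_ofFn]
      rfl
    rw [e2]
    simp [l]

/-- `α + P^*` decomposition inside `S` -/
def Dec (S P : Set (Vec m)) (B : ℕ) (v : Vec m) : Prop :=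
  ∃ α x, nrm α ≤ B ∧ x ∈ AddSubmonoid.closure P ∧ v = α + x ∧
    ∀ z ∈ AddSubmonoid.closure P, α + z ∈ S

lemma single_mul (j : Fin m) (a b : ℕ) :
    (Pi.single j (a * b) : Vec m) = b • (Pi.single j a : Vec m) := by
  funext l
  by_cases h : l = j
  · subst h; simp [mul_comm]
  · simp [h]

lemma single_add (j : Fin m) (a b : ℕ) :
    (Pi.single j (a + b) : Vec m) = (Pi.single j a : Vec m) + (Pi.single j b : Vec m) := by
  funext l
  by_cases h : l = j
  · subst h; simp
  · simp [h]

def tyL {R : ℕ} (f : Fin R → Vec m) : ℕ := ∏ i, max 1 (nrm (f i))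

def tyP {R : ℕ} (f : Fin R → Vec m) : Set (Vec m) :=
  {β | ∃ i, f i ≠ 0 ∧ β = (tyL f / nrm (f i)) • f i}

lemma tyL_pos {R : ℕ} (f : Fin R → Vec m) : 1 ≤ tyL f :=
  Finset.one_le_prod' (fun i _ => le_max_left _ _)

lemma tyL_le {R : ℕ} (f : Fin R → Vec m) (D : ℕ) (hD : 1 ≤ D) (hf : ∀ i, nrm (f i) ≤ D) :
    tyL f ≤ D ^ R := by
  have := Finset.prod_le_pow_card Finset.univ (fun i => max 1 (nrm (f i))) D
    (fun i _ => max_le hD (hf i))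
  simpa [tyL] using this

lemma nrm_pos {v : Vec m} (h : v ≠ 0) : 1 ≤ nrm v := by
  by_contra h'
  exact h (nrm_eq_zero (by omega))

lemma dvd_tyL {R : ℕ} (f : Fin R → Vec m) (i : Fin R) (h : f i ≠ 0) : nrm (f i) ∣ tyL f := by
  have h1 : max 1 (nrm (f i)) ∣ tyL f := Finset.dvd_prod_of_mem _ (Finset.mem_univ i)
  rwa [max_eq_right (nrm_pos h)] at h1

lemma nrm_tyP {R : ℕ} (f : Fin R → Vec m) (β : Vec m) (h : β ∈ tyP f) : nrm β = tyL f := by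
  obtain ⟨i, h1, rfl⟩ := h
  rw [nrm_smul]
  exact Nat.div_mul_cancel (dvd_tyL f i h1)

lemma nrm_sum {ι : Type*} (s : Finset ι) (f : ι → Vec m) : nrm (∑ i ∈ s, f i) = ∑ i ∈ s, nrm (f i) := by
  classical
  induction s using Finset.induction_on with
  | empty => simp [nrm_zero]
  | insert a s ha ih => rw [Finset.sum_insert ha, Finset.sum_insert ha, nrm_add, ih]

lemma dec_of_semi {N : Type*} {S : Set (Vec m)} {D N1 : ℕ} (H : Semi N S D N1) (R : ℕ)
    (hR : (R * D + 1) ^ m < 2 ^ R) (hD : 1 ≤ D) (v : Vec m) (hv : v ∈ S) (h0 : v ≠ 0) :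
    ∃ f : Fin R → Vec m, (∀ i, nrm (f i) ≤ D) ∧ Dec S (tyP f) (N1 + R * D ^ R) v := by
  obtain ⟨W, α, x, hb, hα, hx, rfl⟩ := H.complete v hv h0
  have hQ : ∀ β ∈ {β | ∃ X, some X ∈ W ∧ β ∈ H.pm X}, nrm β ≤ D := by
    rintro β ⟨X, _, h⟩
    exact H.pm_le X β h
  obtain ⟨f, n, hf, rfl⟩ := carath _ D R hQ hR x hx
  have hfD : ∀ i, nrm (f i) ≤ D := by
    intro i
    rcases hf i with h | h
    · rw [h, nrm_zero]; omega
    · exact hQ _ h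
  have hfc : ∀ i, f i ∈ AddSubmonoid.closure {β | ∃ X, some X ∈ W ∧ β ∈ H.pm X} := by
    intro i
    rcases hf i with h | h
    · rw [h]; exact zero_mem _
    · exact AddSubmonoid.subset_closure h
  let k : Fin R → ℕ := fun i => tyL f / nrm (f i)
  refine ⟨f, hfD, α + ∑ i, (n i % k i) • f i, ∑ i, (n i / k i) • (k i • f i), ?_, ?_, ?_, ?_⟩
  · rw [nrm_add, nrm_sum]
    have : ∑ i, nrm ((n i % k i) • f i) ≤ ∑ i : Fin R, D ^ R := by
      apply Finset.sum_le_sum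
      intro i _
      rw [nrm_smul]
      by_cases h : f i = 0
      · simp [h, nrm_zero]
      · have h1 := nrm_pos h
        have h2 : k i * nrm (f i) = tyL f := Nat.div_mul_cancel (dvd_tyL f i h)
        have h3 : 0 < k i := by
          rcases Nat.eq_zero_or_pos (k i) with h4 | h4
          · have := tyL_pos f; rw [h4] at h2; omega
          · exact h4
        have h4 := (Nat.mod_lt (n i) h3).le
        calc _ ≤ k i * nrm (f i) := Nat.mul_le_mul_right _ h4
          _ = _ := h2
          _ ≤ _ := tyL_le f D hD hfD
    simp only [Finset.sum_const, Finset.card_univ, Fintype.card_fin, smul_eq_mul] at this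
    omega
  · refine sum_mem fun i _ => nsmul_mem ?_ _
    by_cases h : f i = 0
    · rw [h, smul_zero]; exact zero_mem _
    · exact AddSubmonoid.subset_closure ⟨i, h, rfl⟩
  · rw [add_assoc, ← Finset.sum_add_distrib]
    congr 1
    apply Finset.sum_congr rfl
    intro i _
    rw [smul_smul, ← add_smul, Nat.mod_add_div']
  · intro z hz
    rw [add_assoc]
    refine H.sound W α hb _ (add_mem (sum_mem fun i _ => nsmul_mem (hfc i) _) ?_)
    refine AddSubmonoid.closure_le.2 ?_ hz
    rintro β ⟨i, h, rfl⟩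
    exact nsmul_mem (hfc i) _

lemma egz (l : ℕ) (hl : 1 ≤ l) (k : ℕ) : ∀ M : Multiset ℕ, Multiset.card M ≤ k →
    ∃ M' ≤ M, Multiset.card M' ≤ 2 * l ∧ ∃ c, M.sum = M'.sum + c * l := by
  induction k with
  | zero => intro M h; exact ⟨M, le_rfl, by omega, 0, by simp⟩
  | succ k ih =>
    intro M h
    by_cases hc : Multiset.card M ≤ 2 * l
    · exact ⟨M, le_rfl, hc, 0, by simp⟩
    obtain ⟨t, ht1, ht2, ht3⟩ := Int.erdos_ginzburg_ziv_multiset (n := l)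
      (M.map (fun x : ℕ => (x : ℤ))) (by simp; omega)
    let u := t.map Int.toNat
    have hu : u ≤ M := by
      have := Multiset.map_le_map (f := Int.toNat) ht1
      simpa [u, Multiset.map_map] using this
    have htu : t = u.map (fun x : ℕ => (x : ℤ)) := by
      simp only [u, Multiset.map_map]
      conv_lhs => rw [← Multiset.map_id t]
      apply Multiset.map_congr rfl
      intro x hx
      have := Multiset.mem_of_le ht1 hx
      simp only [Multiset.mem_map] at this
      obtain ⟨a, _, rfl⟩ := this
      simp
    have hd : l ∣ u.sum := by
      rw [htu] at ht3
      have : (u.map (fun x : ℕ => (x : ℤ))).sum = ((u.sum : ℕ) : ℤ) := by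
        rw [Nat.cast_multiset_sum]
      rw [this] at ht3
      exact_mod_cast ht3
    obtain ⟨M1, rfl⟩ := Multiset.le_iff_exists_add.1 hu
    have hcu : Multiset.card u = l := by simp [u, ht2]
    obtain ⟨M', a1, a2, c, a3⟩ := ih M1 (by simp at h; omega)
    obtain ⟨e, he⟩ := hd
    exact ⟨M', a1.trans (Multiset.le_add_left _ _), a2, c + e, by
      rw [Multiset.sum_add, he, a3]; ring⟩

lemma multiset_single (j : Fin m) (M : Multiset (Vec m)) (h : ∀ β ∈ M, ∀ l, l ≠ j → β l = 0) :
    M.sum = Pi.single j ((M.map (fun β => β j)).sum) := by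
  induction M using Multiset.induction_on with
  | empty => simp
  | cons b M ih =>
    rw [Multiset.sum_cons, ih (fun β hβ => h β (Multiset.mem_cons_of_mem hβ)), Multiset.map_cons,
      Multiset.sum_cons, Pi.single_add]
    congr 1
    funext l
    by_cases hl : l = j
    · subst hl; simp
    · simp [hl, h b (Multiset.mem_cons_self _ _) l hl]

lemma mem_le_sum (M : Multiset (Vec m)) (β : Vec m) (h : β ∈ M) (l : Fin m) : β l ≤ M.sum l := by
  obtain ⟨M', rfl⟩ := Multiset.exists_cons_of_mem h
  simp

set_option maxHeartbeats 2000000 in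
lemma unary_of_semi {N : Type*} [Fintype N] {S : Set (Vec m)} {D N1 : ℕ} (H : Semi N S D N1)
    (hD : 1 ≤ D) (j : Fin m) : ∃ p, 1 ≤ p ∧ p ≤ D ^ Fintype.card N ∧
      ∀ v ∈ S, N1 < nrm v → (∀ l, l ≠ j → v l = 0) →
        Dec S {Pi.single j p} (N1 + 2 * D * D + D ^ Fintype.card N) v := by
  classical
  have hex : ∀ X : N, ∃ k : ℕ, 1 ≤ k ∧ k ≤ D ∧
      ((∃ k', 1 ≤ k' ∧ Pi.single j k' ∈ H.pm X) → Pi.single j k ∈ H.pm X) := by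
    intro X
    by_cases h : ∃ k', 1 ≤ k' ∧ Pi.single j k' ∈ H.pm X
    · obtain ⟨k, h1, h2⟩ := h
      have := H.pm_le _ _ h2
      rw [nrm_single] at this
      exact ⟨k, h1, this, fun _ => h2⟩
    · exact ⟨1, le_rfl, hD, fun h' => absurd h' h⟩
  choose lam hl1 hl2 hl3 using hex
  have hp1 : 1 ≤ ∏ X, lam X := Finset.one_le_prod' (fun i _ => hl1 i)
  have hp2 : ∏ X, lam X ≤ D ^ Fintype.card N := by
    have := Finset.prod_le_pow_card Finset.univ lam D (fun i _ => hl2 i)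
    simpa using this
  refine ⟨∏ X, lam X, hp1, hp2, ?_⟩
  intro v hv hN hun
  have h0 : v ≠ 0 := by rintro rfl; simp [nrm_zero] at hN
  obtain ⟨W, α, x, hb, hα, hx, rfl⟩ := H.complete v hv h0
  obtain ⟨M, hM, rfl⟩ := AddSubmonoid.exists_multiset_of_mem_closure hx
  have hMu : ∀ β ∈ M, ∀ l, l ≠ j → β l = 0 := by
    intro β hβ l hl
    have h1 := hun l hl
    have h2 := mem_le_sum M β hβ l
    simp only [Pi.add_apply] at h1
    omega
  have hsingle : ∀ β ∈ M, β = Pi.single j (β j) := by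
    intro β hβ
    funext l
    by_cases hl : l = j
    · subst hl; simp
    · simp [hl, hMu β hβ l hl]
  have hexβ : ∃ β ∈ M, β ≠ 0 := by
    by_contra hcon
    push Not at hcon
    have : M.sum = 0 := Multiset.sum_eq_zero hcon
    rw [this, add_zero] at hN
    omega
  obtain ⟨β, hβM, hβ0⟩ := hexβ
  obtain ⟨X, hXW, hX⟩ := hM β hβM
  have hk : 1 ≤ β j := by
    by_contra hc
    apply hβ0
    rw [hsingle β hβM, show β j = 0 by omega]
    simp
  have hlam : Pi.single j (lam X) ∈ H.pm X := hl3 X ⟨β j, hk, by rw [← hsingle β hβM]; exact hX⟩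
  have hlamQ : (Pi.single j (lam X) : Vec m) ∈ AddSubmonoid.closure {β | ∃ X, some X ∈ W ∧ β ∈ H.pm X} :=
    AddSubmonoid.subset_closure ⟨X, hXW, hlam⟩
  obtain ⟨q, hq⟩ : lam X ∣ ∏ X, lam X := Finset.dvd_prod_of_mem _ (Finset.mem_univ X)
  have hq0 : 0 < q := by
    rcases Nat.eq_zero_or_pos q with h | h
    · rw [h] at hq; omega
    · exact h
  obtain ⟨M', hM', hcard, c, hc⟩ := egz (lam X) (hl1 X) _ (M.map (fun β => β j)) le_rfl
  have hM'Q : ∀ k ∈ M', (Pi.single j k : Vec m) ∈ {β | ∃ X, some X ∈ W ∧ β ∈ H.pm X} := by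
    intro k hk
    have := Multiset.mem_of_le hM' hk
    simp only [Multiset.mem_map] at this
    obtain ⟨γ, hγ, rfl⟩ := this
    rw [← hsingle γ hγ]
    exact hM γ hγ
  have hM'sum : (Pi.single j M'.sum : Vec m) ∈ AddSubmonoid.closure {β | ∃ X, some X ∈ W ∧ β ∈ H.pm X} := by
    have : (Pi.single j M'.sum : Vec m) = (M'.map (fun k => (Pi.single j k : Vec m))).sum := by
      rw [multiset_single j]
      · simp
      · intro β hβ l hl
        simp only [Multiset.mem_map] at hβ
        obtain ⟨k, _, rfl⟩ := hβ
        simp [hl]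
    rw [this]
    refine AddSubmonoid.multiset_sum_mem _ _ ?_
    intro β hβ
    simp only [Multiset.mem_map] at hβ
    obtain ⟨k, hk, rfl⟩ := hβ
    exact AddSubmonoid.subset_closure (hM'Q k hk)
  refine ⟨α + Pi.single j M'.sum + (c % q) • Pi.single j (lam X), (c / q) • Pi.single j (∏ X, lam X),
    ?_, ?_, ?_, ?_⟩
  · rw [nrm_add, nrm_add, nrm_smul, nrm_single, nrm_single]
    have h1 : M'.sum ≤ 2 * D * D := by
      have h2 : M'.sum ≤ Multiset.card M' • D := by
        apply Multiset.sum_le_card_nsmul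
        intro k hk
        obtain ⟨X', _, h3⟩ := hM'Q k hk
        have := H.pm_le _ _ h3
        rwa [nrm_single] at this
      rw [smul_eq_mul] at h2
      refine h2.trans (Nat.mul_le_mul_right _ (hcard.trans (Nat.mul_le_mul_left _ (hl2 X))))
    have h2 : c % q * lam X ≤ D ^ Fintype.card N := by
      refine le_trans ?_ hp2
      rw [hq, mul_comm]
      exact Nat.mul_le_mul_left _ (Nat.mod_lt _ hq0).le
    omega
  · exact AddSubmonoid.nsmul_mem _ (AddSubmonoid.subset_closure (Set.mem_singleton _)) _
  · rw [multiset_single j M hMu, hc, hq]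
    have h1 := single_mul j (lam X) q
    have h2 := single_mul j (lam X) c
    have h3 := single_add j M'.sum (lam X * c)
    rw [h1, smul_smul]
    have h4 : c • (Pi.single j (lam X) : Vec m) =
        (c % q) • Pi.single j (lam X) + (c / q * q) • Pi.single j (lam X) := by
      rw [← add_smul, Nat.mod_add_div']
    rw [mul_comm c (lam X), h3, h2, h4]
    simp only [add_assoc]
  · intro z hz
    rw [add_assoc, add_assoc]
    refine H.sound W α hb _ (add_mem hM'sum (add_mem (nsmul_mem hlamQ _) ?_))
    refine AddSubmonoid.closure_le.2 ?_ hz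
    rintro β rfl
    have : (Pi.single j (∏ X, lam X) : Vec m) = q • Pi.single j (lam X) := by
      rw [hq]; exact single_mul j (lam X) q
    rw [SetLike.mem_coe, this]
    exact nsmul_mem hlamQ _

end Types

section Auto
variable {m : ℕ}

lemma exists_word (n : ℕ) : ∀ v : Vec m, nrm v = n → ∃ w : List (Fin m), parikh w = v := by
  induction n with
  | zero => intro v h; exact ⟨[], by rw [parikh_nil, nrm_eq_zero h]⟩
  | succ n ih =>
    intro v h
    have : ∃ i, v i ≠ 0 := by
      by_contra hc
      push Not at hc
      have : v = 0 := funext hc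
      rw [this, nrm_zero] at h
      omega
    obtain ⟨i, hi⟩ := this
    have hv : v = Pi.single i 1 + (v - Pi.single i 1) := by
      funext l
      by_cases hl : l = i
      · subst hl; simp; omega
      · simp [hl]
    have h2 := congrArg nrm hv
    rw [nrm_add, nrm_single] at h2
    obtain ⟨w, hw⟩ := ih (v - Pi.single i 1) (by omega)
    exact ⟨i :: w, by rw [parikh_cons, hw]; exact hv.symm⟩

/-- Restricting a DFA to its reachable states. -/
lemma dfa_restrict {A σ : Type} (M : DFA A σ) (F : Finset σ) (hF : ∀ w, M.eval w ∈ F) :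
    ∃ (τ : Type) (_ : Fintype τ) (B : DFA A τ), Fintype.card τ ≤ F.card ∧ B.accepts = M.accepts := by
  classical
  let τ := {s : σ // s ∈ F ∧ ∃ w, M.eval w = s}
  have inj : Function.Injective (fun t : τ => (⟨t.1, t.2.1⟩ : F)) := by
    intro a b h
    exact Subtype.ext (congrArg (fun t : F => t.1) h)
  let ft : Fintype τ := Fintype.ofInjective _ inj
  let B : DFA A τ :=
    { step := fun s a => ⟨M.step s.1 a, by
        obtain ⟨w, hw⟩ := s.2.2
        have : M.eval (w ++ [a]) = M.step s.1 a := by rw [DFA.eval_append_singleton, hw]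
        exact ⟨this ▸ hF _, _, this⟩⟩
      start := ⟨M.start, hF [], [], rfl⟩
      accept := {s | s.1 ∈ M.accept} }
  refine ⟨τ, ft, B, ?_, ?_⟩
  · have := @Fintype.card_le_of_injective τ F ft _ _ inj
    simpa using this
  · have key : ∀ w, (B.eval w).1 = M.eval w := by
      intro w
      induction w using List.reverseRecOn with
      | nil => rfl
      | append_singleton w a ih =>
        rw [DFA.eval_append_singleton, DFA.eval_append_singleton, ← ih]
    ext w
    rw [DFA.mem_accepts, DFA.mem_accepts, ← key]
    rfl

abbrev Adv (m : ℕ) := Fin m × ℕ × Bool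

def advStep (s : Adv m) (a : Fin m) : Adv m :=
  if s.2.1 = 0 then (a, 1, false) else if s.2.2 = true then s
  else if a = s.1 then (s.1, s.2.1 + 1, false) else (s.1, s.2.1, true)

def advEval (j0 : Fin m) (w : List (Fin m)) : Adv m := w.foldl advStep (j0, 0, false)

abbrev St (m : ℕ) := Option (Adv m × Vec m × Vec m)

open Classical in
noncomputable def pstep (N : ℕ) (L : Adv m → ℕ) (P : Adv m → Set (Vec m)) : St m → Fin m → St m
  | none, _ => none
  | some (s, x, y), a =>
    if nrm x < N then some (advStep s a, x + Pi.single a 1, 0)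
    else if nrm (y + Pi.single a 1) < L s then some (s, x, y + Pi.single a 1)
    else if y + Pi.single a 1 ∈ P s then some (s, x, 0) else none

noncomputable def pdfa (j0 : Fin m) (N : ℕ) (L : Adv m → ℕ) (P : Adv m → Set (Vec m))
    (S : Set (Vec m)) : DFA (Fin m) (St m) where
  step := pstep N L P
  start := some ((j0, 0, false), 0, 0)
  accept := {t | ∃ s x y, t = some (s, x, y) ∧ ((nrm x < N ∧ x ∈ S) ∨
    (¬ nrm x < N ∧ ∀ z ∈ AddSubmonoid.closure (P s), x + y + z ∈ S))}

lemma pdfa_step (j0 : Fin m) (N : ℕ) (L : Adv m → ℕ) (P : Adv m → Set (Vec m))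
    (S : Set (Vec m)) : (pdfa j0 N L P S).step = pstep N L P := rfl

lemma advStep_le (s : Adv m) (a : Fin m) : (advStep s a).2.1 ≤ s.2.1 + 1 := by
  unfold advStep
  split_ifs <;> simp

def PInv (N : ℕ) (L : Adv m → ℕ) (P : Adv m → Set (Vec m)) (w : List (Fin m)) (t : St m) : Prop :=
  ∀ s x y, t = some (s, x, y) → ∃ z ∈ AddSubmonoid.closure (P s), parikh w = x + y + z ∧
    (nrm x < N → y = 0 ∧ z = 0) ∧ nrm x ≤ N ∧ s.2.1 ≤ nrm x ∧ nrm y ≤ L s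

lemma pinv (j0 : Fin m) (N : ℕ) (L : Adv m → ℕ) (P : Adv m → Set (Vec m))
    (S : Set (Vec m)) (w : List (Fin m)) : PInv N L P w ((pdfa j0 N L P S).eval w) := by
  induction w using List.reverseRecOn with
  | nil =>
    intro s x y h
    have h' : some ((j0, 0, false), (0 : Vec m), (0 : Vec m)) = some (s, x, y) := h
    simp only [Option.some.injEq, Prod.mk.injEq] at h'
    obtain ⟨rfl, rfl, rfl⟩ := h'
    exact ⟨0, zero_mem _, by simp [parikh_nil], by simp, by simp [nrm_zero], by simp, by simp [nrm_zero]⟩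
  | append_singleton w a ih =>
    rw [DFA.eval_append_singleton]
    generalize (pdfa j0 N L P S).eval w = t at ih
    intro s x y h
    have h' : pstep N L P t a = some (s, x, y) := h
    rcases t with _ | ⟨s0, x0, y0⟩
    · simp [pstep] at h'
    obtain ⟨z, hz, hw, h1, h2, h3, h4⟩ := ih s0 x0 y0 rfl
    have hwa : parikh (w ++ [a]) = parikh w + Pi.single a 1 := by
      rw [parikh_append, parikh_singleton]
    rw [hwa, hw]
    simp only [pstep] at h'
    split_ifs at h' with c1 c2 c3
    · simp only [Option.some.injEq, Prod.mk.injEq] at h'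
      obtain ⟨rfl, rfl, rfl⟩ := h'
      obtain ⟨rfl, rfl⟩ := h1 c1
      have := advStep_le s0 a
      have h5 : nrm (x0 + Pi.single a 1) = nrm x0 + 1 := by rw [nrm_add, nrm_single]
      exact ⟨0, zero_mem _, by simp, by simp, by omega, by omega, by simp [nrm_zero]⟩
    · simp only [Option.some.injEq, Prod.mk.injEq] at h'
      obtain ⟨rfl, rfl, rfl⟩ := h'
      exact ⟨z, hz, by abel, fun h => absurd h c1, h2, h3, c2.le⟩
    · simp only [Option.some.injEq, Prod.mk.injEq] at h'
      obtain ⟨rfl, rfl, rfl⟩ := h'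
      exact ⟨z + (y0 + Pi.single a 1), add_mem hz (AddSubmonoid.subset_closure c3), by abel_nf,
        fun h => absurd h c1, h2, h3, by simp [nrm_zero]⟩

lemma eval_small (j0 : Fin m) (N : ℕ) (L : Adv m → ℕ) (P : Adv m → Set (Vec m))
    (S : Set (Vec m)) (w : List (Fin m)) : w.length ≤ N →
    (pdfa j0 N L P S).eval w = some (advEval j0 w, parikh w, 0) := by
  induction w using List.reverseRecOn with
  | nil => intro _; simp [pdfa, advEval, parikh_nil, DFA.eval]
  | append_singleton w a ih =>
    intro h
    simp only [List.length_append, List.length_singleton] at h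
    rw [DFA.eval_append_singleton, ih (by omega)]
    have : nrm (parikh w) < N := by rw [nrm_parikh]; omega
    rw [pdfa_step]
    simp only [pstep, this, if_true, advEval, List.foldl_append, List.foldl_cons, List.foldl_nil,
      parikh_append, parikh_singleton]

lemma eval_part (j0 : Fin m) (N : ℕ) (L : Adv m → ℕ) (P : Adv m → Set (Vec m))
    (S : Set (Vec m)) (s : Adv m) (x : Vec m) (hx : ¬ nrm x < N) (w : List (Fin m)) :
    nrm (parikh w) < L s →
    (pdfa j0 N L P S).evalFrom (some (s, x, 0)) w = some (s, x, parikh w) := by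
  induction w using List.reverseRecOn with
  | nil => intro _; simp [parikh_nil]
  | append_singleton w a ih =>
    intro h
    rw [parikh_append, parikh_singleton] at h ⊢
    rw [DFA.evalFrom_append_singleton, ih (by rw [nrm_add] at h; omega)]
    rw [pdfa_step]
    simp only [pstep, hx, if_false, h, if_true]

lemma eval_blocks (j0 : Fin m) (N : ℕ) (L : Adv m → ℕ) (P : Adv m → Set (Vec m))
    (S : Set (Vec m)) (s : Adv m) (x : Vec m) (hx : ¬ nrm x < N) (hL : 1 ≤ L s)
    (hP : ∀ β ∈ P s, nrm β = L s) (z : Vec m) (hz : z ∈ AddSubmonoid.closure (P s)) :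
    ∃ w, parikh w = z ∧
    (pdfa j0 N L P S).evalFrom (some (s, x, 0)) w = some (s, x, 0) := by
  induction hz using AddSubmonoid.closure_induction with
  | zero => exact ⟨[], parikh_nil, rfl⟩
  | add z1 z2 _ _ h1 h2 =>
    obtain ⟨w1, a1, b1⟩ := h1
    obtain ⟨w2, a2, b2⟩ := h2
    exact ⟨w1 ++ w2, by rw [parikh_append, a1, a2], by rw [DFA.evalFrom_of_append, b1, b2]⟩
  | mem β hβ =>
    obtain ⟨w, hw⟩ := exists_word _ β rfl
    refine ⟨w, hw, ?_⟩
    have hn := hP β hβ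
    induction w using List.reverseRecOn with
    | nil => rw [← hw, parikh_nil, nrm_zero] at hn; omega
    | append_singleton w a _ =>
      have h2 := hw
      rw [parikh_append, parikh_singleton] at h2
      have h3 : nrm (parikh w) + 1 = L s := by rw [← hn, ← h2, nrm_add, nrm_single]
      rw [DFA.evalFrom_append_singleton, eval_part j0 N L P S s x hx w (by omega)]
      rw [pdfa_step]
      simp only [pstep, hx, if_false, h2, hn, lt_irrefl, hβ, if_true]

lemma pdfa_image (j0 : Fin m) (N : ℕ) (L : Adv m → ℕ) (P : Adv m → Set (Vec m))
    (S : Set (Vec m)) (hL : ∀ s, 1 ≤ L s) (hP : ∀ s, ∀ β ∈ P s, nrm β = L s)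
    (hS : ∀ v ∈ S, N ≤ nrm v → ∃ w1 : List (Fin m), w1.length = N ∧ ∃ r z, nrm r < L (advEval j0 w1) ∧
      z ∈ AddSubmonoid.closure (P (advEval j0 w1)) ∧ v = parikh w1 + r + z ∧
      ∀ z' ∈ AddSubmonoid.closure (P (advEval j0 w1)), parikh w1 + r + z' ∈ S) :
    parikhImage (pdfa j0 N L P S).accepts = S := by
  ext v
  constructor
  · rintro ⟨w, hw, rfl⟩
    have hw' : (pdfa j0 N L P S).eval w ∈ (pdfa j0 N L P S).accept := hw
    obtain ⟨s, x, y, he, h⟩ := hw'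
    obtain ⟨z, hz, h0, h1, h2, h3, h4⟩ := pinv j0 N L P S w s x y he
    rw [h0]
    rcases h with ⟨h5, h6⟩ | ⟨h5, h6⟩
    · obtain ⟨rfl, rfl⟩ := h1 h5
      simpa using h6
    · exact h6 z hz
  · intro hv
    by_cases hn : nrm v < N
    · obtain ⟨w, rfl⟩ := exists_word _ v rfl
      refine ⟨w, ?_, rfl⟩
      show (pdfa j0 N L P S).eval w ∈ (pdfa j0 N L P S).accept
      rw [eval_small _ _ _ _ _ _ (by rw [nrm_parikh] at hn; omega)]
      exact ⟨_, _, _, rfl, Or.inl ⟨hn, hv⟩⟩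
    · obtain ⟨w1, hw1, r, z, hr, hz, hvv, hall⟩ := hS v hv (by omega)
      have hx : ¬ nrm (parikh w1) < N := by rw [nrm_parikh]; omega
      obtain ⟨w2, h2, e2⟩ := eval_blocks j0 N L P S (advEval j0 w1) (parikh w1) hx (hL _) (hP _) z hz
      obtain ⟨w3, rfl⟩ := exists_word _ r rfl
      have e3 := eval_part j0 N L P S (advEval j0 w1) (parikh w1) hx w3 hr
      refine ⟨w1 ++ w2 ++ w3, ?_, by rw [parikh_append, parikh_append, h2, hvv]; abel⟩
      show (pdfa j0 N L P S).eval _ ∈ (pdfa j0 N L P S).accept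
      have e1 := eval_small j0 N L P S w1 hw1.le
      unfold DFA.eval at e1 ⊢
      rw [DFA.evalFrom_of_append, DFA.evalFrom_of_append, e1, e2, e3]
      exact ⟨_, _, _, rfl, Or.inr ⟨hx, hall⟩⟩

lemma pdfa_finite (j0 : Fin m) (N : ℕ) (L : Adv m → ℕ) (P : Adv m → Set (Vec m))
    (S : Set (Vec m)) (Lm : ℕ) (hL : ∀ s, L s ≤ Lm) :
    ∃ (τ : Type) (_ : Fintype τ) (B : DFA (Fin m) τ),
      Fintype.card τ ≤ m * ((N + 1) * 2) * ((N + 1) ^ m * (Lm + 1) ^ m) + 1 ∧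
      B.accepts = (pdfa j0 N L P S).accepts := by
  classical
  let F : Finset (St m) := Finset.insertNone
    (((Finset.univ : Finset (Fin m)) ×ˢ (Finset.range (N+1) ×ˢ (Finset.univ : Finset Bool))) ×ˢ
      ((Fintype.piFinset fun _ => Finset.range (N+1)) ×ˢ (Fintype.piFinset fun _ => Finset.range (Lm+1))))
  have hF : F.card = m * ((N + 1) * 2) * ((N + 1) ^ m * (Lm + 1) ^ m) + 1 := by
    simp [F, Finset.card_insertNone, Finset.card_product, Fintype.card_piFinset]
  rw [← hF]
  apply dfa_restrict
  intro w
  have hi := pinv j0 N L P S w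
  generalize (pdfa j0 N L P S).eval w = t at hi
  rcases t with _ | ⟨s, x, y⟩
  · simp [F]
  · obtain ⟨z, hz, h0, h1, h2, h3, h4⟩ := hi s x y rfl
    simp only [F, Finset.mem_insertNone, Option.mem_def, Option.some.injEq, forall_eq', Finset.mem_product, Finset.mem_univ,
      true_and, and_true, Fintype.mem_piFinset, Finset.mem_range]
    refine ⟨by omega, fun i => ?_, fun i => ?_⟩
    · have := le_nrm x i; omega
    · have := le_nrm y i; have := hL s; omega

/-! Filling lemmas. -/

lemma fillG (j : Fin m) (k : ℕ) (M : Multiset (Vec m)) : ∀ α : Vec m, k ≤ (α + M.sum) j →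
    ∃ M1 M2, M = M1 + M2 ∧ Multiset.card M1 ≤ k - α j ∧ k ≤ (α + M1.sum) j := by
  induction M using Multiset.induction_on with
  | empty => intro α h; exact ⟨0, 0, by simp, by simp, h⟩
  | cons b M ih =>
    intro α h
    by_cases h1 : k ≤ α j
    · exact ⟨0, b ::ₘ M, by simp, by simp, by simpa using h1⟩
    by_cases h2 : b j = 0
    · obtain ⟨M1, M2, rfl, a2, a3⟩ := ih α (by simpa [h2] using h)
      exact ⟨M1, b ::ₘ M2, by simp, a2, a3⟩
    · obtain ⟨M1, M2, rfl, a2, a3⟩ := ih (α + b) (by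
        simp only [Multiset.sum_cons, Pi.add_apply] at h ⊢; omega)
      refine ⟨b ::ₘ M1, M2, by simp, ?_, ?_⟩
      · simp only [Pi.add_apply, Multiset.card_cons] at a2 ⊢; omega
      · simp only [Multiset.sum_cons, Pi.add_apply] at a3 ⊢; omega

lemma fillF (N L : ℕ) (M : Multiset (Vec m)) (hM : ∀ β ∈ M, nrm β = L) : ∀ α : Vec m,
    nrm α < N + L → N ≤ nrm (α + M.sum) →
    ∃ M1 M2, M = M1 + M2 ∧ N ≤ nrm (α + M1.sum) ∧ nrm (α + M1.sum) < N + L := by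
  induction M using Multiset.induction_on with
  | empty => intro α h h'; exact ⟨0, 0, by simp, h', by simpa using h⟩
  | cons b M ih =>
    intro α h h'
    by_cases h1 : N ≤ nrm α
    · exact ⟨0, b ::ₘ M, by simp, by simpa using h1, by simpa using h⟩
    have hb := hM b (Multiset.mem_cons_self _ _)
    obtain ⟨M1, M2, rfl, a2, a3⟩ := ih (fun β hβ => hM β (Multiset.mem_cons_of_mem hβ)) (α + b)
      (by rw [nrm_add]; omega) (by rwa [Multiset.sum_cons, ← add_assoc] at h')
    exact ⟨b ::ₘ M1, M2, by simp, by rwa [Multiset.sum_cons, ← add_assoc],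
      by rwa [Multiset.sum_cons, ← add_assoc]⟩

lemma nrm_msum (L : ℕ) (M : Multiset (Vec m)) (hM : ∀ β ∈ M, nrm β = L) :
    nrm M.sum = Multiset.card M * L := by
  induction M using Multiset.induction_on with
  | empty => simp [nrm_zero]
  | cons b M ih =>
    rw [Multiset.sum_cons, nrm_add, ih (fun β hβ => hM β (Multiset.mem_cons_of_mem hβ)),
      hM b (Multiset.mem_cons_self _ _), Multiset.card_cons]
    ring

/-- Rebalancing of a decomposition. -/
lemma dec_fill {S : Set (Vec m)} {P : Set (Vec m)} {B N L k : ℕ} {v : Vec m} (h : Dec S P B v)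
    (hP : ∀ β ∈ P, nrm β = L) (hL : 1 ≤ L) (j l : Fin m) (hj : k ≤ v j) (hl : 1 ≤ v l)
    (hN : N ≤ nrm v) (hB : B + (k + 1) * L ≤ N) :
    ∃ γ z, v = γ + z ∧ z ∈ AddSubmonoid.closure P ∧ k ≤ γ j ∧ 1 ≤ γ l ∧ N ≤ nrm γ ∧ nrm γ < N + L ∧
      ∀ z ∈ AddSubmonoid.closure P, γ + z ∈ S := by
  obtain ⟨α, x, h1, h2, rfl, h4⟩ := h
  obtain ⟨M, hM, rfl⟩ := AddSubmonoid.exists_multiset_of_mem_closure h2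
  have hM' : ∀ β ∈ M, nrm β = L := fun β hβ => hP β (hM β hβ)
  obtain ⟨M1, M2, rfl, c1, d1⟩ := fillG j k M α hj
  have e1 : nrm M1.sum = Multiset.card M1 * L := nrm_msum L M1 (fun β hβ => hM' β (by simp [hβ]))
  obtain ⟨M3, M4, rfl, c2, d2⟩ := fillG l 1 M2 (α + M1.sum) (by
    rwa [Multiset.sum_add, ← add_assoc] at hl)
  have e2 : nrm M3.sum = Multiset.card M3 * L := nrm_msum L M3 (fun β hβ => hM' β (by simp [hβ]))
  obtain ⟨M5, M6, rfl, c3, d3⟩ := fillF N L M4 (fun β hβ => hM' β (by simp [hβ]))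
    (α + M1.sum + M3.sum) (by
      rw [nrm_add, nrm_add, e1, e2]
      have : (Multiset.card M1 + Multiset.card M3) * L ≤ (k + 1) * L :=
        Nat.mul_le_mul_right _ (by omega)
      rw [add_mul] at this
      omega) (by
      rw [Multiset.sum_add, Multiset.sum_add] at hN
      simpa only [add_assoc] using hN)
  have hsub : ∀ M' : Multiset (Vec m), (∀ β ∈ M', β ∈ P) → M'.sum ∈ AddSubmonoid.closure P :=
    fun M' h => AddSubmonoid.multiset_sum_mem _ _ fun β hβ => AddSubmonoid.subset_closure (h β hβ)
  refine ⟨α + M1.sum + M3.sum + M5.sum, M6.sum, ?_, ?_, ?_, ?_, c3, d3, ?_⟩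
  · simp only [Multiset.sum_add, add_assoc]
  · exact hsub _ fun β hβ => hM β (by simp [hβ])
  · simp only [Pi.add_apply] at d1 ⊢; omega
  · simp only [Pi.add_apply] at d2 ⊢; omega
  · intro z hz
    simp only [add_assoc]
    refine h4 _ (add_mem (hsub _ fun β hβ => hM β (by simp [hβ])) (add_mem (hsub _ fun β hβ => hM β (by simp [hβ])) (add_mem (hsub _ fun β hβ => hM β (by simp [hβ])) hz)))

lemma advEval_rep (j0 j : Fin m) (k : ℕ) : advEval j0 (List.replicate (k+1) j) = (j, k + 1, false) := by
  induction k with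
  | zero => simp [advEval, advStep]
  | succ k ih =>
    rw [List.replicate_succ', advEval, List.foldl_append]
    unfold advEval at ih
    rw [ih]
    simp [advStep]

lemma advEval_stay (j : Fin m) (k : ℕ) (w : List (Fin m)) :
    w.foldl advStep (j, k + 1, true) = (j, k + 1, true) := by
  induction w with
  | nil => rfl
  | cons a w ih => rw [List.foldl_cons]; exact ih

lemma advEval_mix (j0 j l : Fin m) (h : l ≠ j) (k : ℕ) (w : List (Fin m)) :
    advEval j0 (List.replicate (k+1) j ++ l :: w) = (j, k + 1, true) := by
  have := advEval_rep j0 j k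
  unfold advEval at this ⊢
  rw [List.foldl_append, this, List.foldl_cons]
  have h2 : advStep (j, k + 1, false) l = (j, k + 1, true) := by simp [advStep, h]
  rw [h2, advEval_stay]

lemma parikh_replicate (k : ℕ) (j : Fin m) : parikh (List.replicate k j) = Pi.single j k := by
  funext i
  by_cases h : i = j
  · subst h; simp [parikh]
  · simp [parikh, List.count_replicate, h, Ne.symm h]

lemma word_split (w : List (Fin m)) (n : ℕ) (h : n ≤ w.length) :
    ∃ w1 w2, w = w1 ++ w2 ∧ w1.length = n :=
  ⟨w.take n, w.drop n, (List.take_append_drop n w).symm, by simp [h]⟩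

end Auto

section Main
variable {m : ℕ}

lemma Dec.mono {S P : Set (Vec m)} {B B' : ℕ} {v : Vec m} (h : Dec S P B v) (hB : B ≤ B') :
    Dec S P B' v := by
  obtain ⟨α, x, h1, h2⟩ := h
  exact ⟨α, x, h1.trans hB, h2⟩

def kT (m D R : ℕ) : ℕ := ((D + 1) ^ m) ^ R
def lM (m D R : ℕ) : ℕ := (m * D) ^ R
def bB (m D R N1 : ℕ) : ℕ := N1 + 2 * D * D + R * lM m D R + lM m D R
def nN (m D R N1 : ℕ) : ℕ :=
  bB m D R N1 + (kT m D R + 1) * lM m D R + m * kT m D R + kT m D R + 2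
def stB (m D R N1 : ℕ) : ℕ :=
  m * ((nN m D R N1 + 1) * 2) * ((nN m D R N1 + 1) ^ m * (lM m D R + 1) ^ m) + 1

lemma exists_types (m D R : ℕ) : ∃ ty : Fin (kT m D R) → Fin R → Vec m,
    (∀ k i, nrm (ty k i) ≤ m * D) ∧
    ∀ f : Fin R → Vec m, (∀ i, nrm (f i) ≤ D) → ∃ k, ty k = f := by
  have hc : Fintype.card (Fin R → Fin m → Fin (D + 1)) = kT m D R := by simp [kT]
  let e := Fintype.equivFinOfCardEq hc
  refine ⟨fun k i l => (e.symm k i l : ℕ), ?_, ?_⟩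
  · intro k i
    have := Finset.sum_le_card_nsmul Finset.univ (fun l => (e.symm k i l : ℕ)) D
      (fun l _ => by omega)
    simpa [nrm] using this
  · intro f hf
    refine ⟨e (fun i l => ⟨f i l, by have := le_nrm (f i) l; have := hf i; omega⟩), ?_⟩
    funext i l
    simp

lemma main_finite {NT : Type*} [Fintype NT] {S : Set (Vec m)} {D N1 : ℕ} (H : Semi NT S D N1)
    (hm : 1 ≤ m) (hD : 1 ≤ D) (R : ℕ) (hR : (R * D + 1) ^ m < 2 ^ R) (hh : Fintype.card NT ≤ R) :
    ∃ (τ : Type) (_ : Fintype τ) (B : DFA (Fin m) τ),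
      Fintype.card τ ≤ stB m D R N1 ∧ parikhImage B.accepts = S := by
  classical
  obtain ⟨ty, hty1, hty2⟩ := exists_types m D R
  choose p hp1 hp2 hp3 using unary_of_semi H hD
  have hmD : D ≤ m * D := Nat.le_mul_of_pos_left _ hm
  have hpL : ∀ j, p j ≤ lM m D R := fun j => (hp2 j).trans
    ((Nat.pow_le_pow_left hmD _).trans (Nat.pow_le_pow_right (by omega) hh))
  have hDL : D ^ R ≤ lM m D R := Nat.pow_le_pow_left hmD _
  let C : Adv m → Prop := fun s => s.2.2 = true ∧ s.2.1 - 1 < kT m D R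
  let L : Adv m → ℕ := fun s => if h : C s then tyL (ty ⟨s.2.1 - 1, h.2⟩) else p s.1
  let P : Adv m → Set (Vec m) := fun s => if h : C s then tyP (ty ⟨s.2.1 - 1, h.2⟩)
    else {Pi.single s.1 (p s.1)}
  have hL1 : ∀ s, 1 ≤ L s := by
    intro s
    by_cases h : C s
    · simp only [L, h, dif_pos]; exact tyL_pos _
    · simp only [L, h, dif_neg, not_false_eq_true]; exact hp1 _
  have hL2 : ∀ s, L s ≤ lM m D R := by
    intro s
    by_cases h : C s
    · simp only [L, h, dif_pos]; exact tyL_le _ _ (by omega) (hty1 _)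
    · simp only [L, h, dif_neg, not_false_eq_true]; exact hpL _
  have hP : ∀ s, ∀ β ∈ P s, nrm β = L s := by
    intro s β hβ
    by_cases h : C s
    · simp only [L, P, h, dif_pos] at hβ ⊢; exact nrm_tyP _ _ hβ
    · simp only [L, P, h, dif_neg, not_false_eq_true] at hβ ⊢
      rw [Set.mem_singleton_iff.1 hβ, nrm_single]
  let j0 : Fin m := ⟨0, hm⟩
  set N := nN m D R N1 with hN
  have hNb : bB m D R N1 + (kT m D R + 1) * lM m D R + m * kT m D R + kT m D R + 2 = N := rfl
  have hBb : N1 + 2 * D * D + R * lM m D R + lM m D R = bB m D R N1 := rfl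
  obtain ⟨τ, ft, B, hB1, hB2⟩ := pdfa_finite j0 N L P S (lM m D R) hL2
  refine ⟨τ, ft, B, hB1, ?_⟩
  rw [hB2]
  refine pdfa_image j0 N L P S hL1 hP ?_
  intro v hv hNv
  -- a frequent letter
  obtain ⟨j, hj⟩ : ∃ j, kT m D R ≤ v j := by
    by_contra hc
    push Not at hc
    have : nrm v ≤ m * kT m D R := by
      have := Finset.sum_le_card_nsmul Finset.univ (fun l => v l) (kT m D R) (fun l _ => (hc l).le)
      simpa [nrm] using this
    omega
  have hv0 : v ≠ 0 := by
    rintro rfl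
    rw [nrm_zero] at hNv
    omega
  by_cases hun : ∀ l, l ≠ j → v l = 0
  · -- unary case
    have hd := (hp3 j v hv (by omega) hun).mono (B' := bB m D R N1) (by
      have := (Nat.pow_le_pow_left hmD _).trans (Nat.pow_le_pow_right (n := m * D) (by omega) hh)
      have h2 : D ^ Fintype.card NT ≤ lM m D R := this
      omega)
    have hvj : v = Pi.single j (v j) := by
      funext l
      by_cases hl : l = j
      · subst hl; simp
      · simp [hl, hun l hl]
    have hvn : nrm v = v j := by conv_lhs => rw [hvj, nrm_single]
    obtain ⟨γ, z, h1, h2, h3, h4, h5, h6, h7⟩ := dec_fill (N := N) (k := 0) hd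
      (L := p j) (by rintro β rfl; exact nrm_single _ _) (hp1 j) j j (Nat.zero_le _) (by omega) hNv
      (by
        have := hpL j
        have h9 : lM m D R ≤ (kT m D R + 1) * lM m D R := Nat.le_mul_of_pos_left _ (by omega)
        omega)
    have hγ : γ = Pi.single j (nrm γ) := by
      have h8 : ∀ l, l ≠ j → γ l = 0 := by
        intro l hl
        have := hun l hl
        rw [h1] at this
        simp only [Pi.add_apply] at this
        omega
      have h9 : γ = Pi.single j (γ j) := by
        funext l
        by_cases hl : l = j
        · subst hl; simp
        · simp [hl, h8 l hl]
      have h10 : nrm γ = γ j := by conv_lhs => rw [h9, nrm_single]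
      rw [h10]; exact h9
    obtain ⟨n', hn'⟩ : ∃ n', N = n' + 1 := ⟨N - 1, by omega⟩
    have had : advEval j0 (List.replicate N j) = (j, N, false) := by
      rw [hn']; exact advEval_rep j0 j n'
    have hLs : L (j, N, false) = p j := by simp [L, C]
    have hPs : P (j, N, false) = {Pi.single j (p j)} := by simp [P, C]
    have hsplit : parikh (List.replicate N j) + Pi.single j (nrm γ - N) = γ := by
      rw [parikh_replicate, ← single_add, show N + (nrm γ - N) = nrm γ by omega, ← hγ]
    refine ⟨List.replicate N j, by simp, Pi.single j (nrm γ - N), z, ?_⟩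
    rw [had, hLs, hPs, hsplit, nrm_single]
    exact ⟨by omega, h2, h1, h7⟩
  · push Not at hun
    obtain ⟨l, hlj, hl⟩ := hun
    obtain ⟨f, hf, hd⟩ := dec_of_semi H R hR hD v hv hv0
    obtain ⟨k, rfl⟩ := hty2 f hf
    have hd := hd.mono (B' := bB m D R N1) (by
      have : R * D ^ R ≤ R * lM m D R := Nat.mul_le_mul_left _ hDL
      omega)
    have hk := k.2
    have hLk : tyL (ty k) ≤ lM m D R := tyL_le _ _ (by omega) (hty1 _)
    obtain ⟨γ, z, h1, h2, h3, h4, h5, h6, h7⟩ := dec_fill (N := N) (k := (k : ℕ) + 1) hd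
      (L := tyL (ty k)) (fun β hβ => nrm_tyP _ _ hβ) (tyL_pos _) j l (by omega) (by omega) hNv
      (by
        have : ((k : ℕ) + 1 + 1) * tyL (ty k) ≤ (kT m D R + 1) * lM m D R :=
          Nat.mul_le_mul (by omega) hLk
        omega)
    have hγ : γ = Pi.single j ((k : ℕ) + 1) + (Pi.single l 1 + (γ - Pi.single j ((k : ℕ) + 1) - Pi.single l 1)) := by
      funext i
      by_cases hi : i = j
      · subst hi
        simp [Ne.symm hlj]; omega
      · by_cases hil : i = l
        · subst hil; simp [hi]; omega
        · simp [hi, hil]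
    obtain ⟨u, hu⟩ := exists_word _ (γ - Pi.single j ((k : ℕ) + 1) - Pi.single l 1) rfl
    rw [← hu] at hγ
    have hγn : nrm γ = (k : ℕ) + 1 + (1 + u.length) := by
      conv_lhs => rw [hγ, nrm_add, nrm_add, nrm_single, nrm_single, nrm_parikh]
    obtain ⟨u1, u2, rfl, hu1⟩ := word_split u (N - (k + 2)) (by omega)
    rw [List.length_append] at hγn
    have had := advEval_mix j0 j l hlj k u1
    have hCs : C (j, (k : ℕ) + 1, true) := ⟨rfl, hk⟩
    have hLs : L (j, (k : ℕ) + 1, true) = tyL (ty k) := by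
      simp only [L, hCs, dif_pos]; rfl
    have hPs : P (j, (k : ℕ) + 1, true) = tyP (ty k) := by
      simp only [P, hCs, dif_pos]; rfl
    have hsplit : parikh (List.replicate ((k : ℕ) + 1) j ++ l :: u1) + parikh u2 = γ := by
      rw [parikh_append, parikh_replicate, parikh_cons]
      conv_rhs => rw [hγ, parikh_append]
      simp only [add_assoc]
    refine ⟨List.replicate ((k : ℕ) + 1) j ++ l :: u1, ?_, parikh u2, z, ?_⟩
    · simp only [List.length_append, List.length_replicate, List.length_cons, hu1]; omega
    · rw [had, hLs, hPs, hsplit, nrm_parikh]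
      exact ⟨by omega, h2, h1, h7⟩

end Main

/-! Bounds. -/

def QB (f : ℕ → ℕ) : Prop := ∃ C, ∀ h, 1 ≤ h → f h ≤ 2 ^ (C * h ^ 2)

lemma QB.const (c : ℕ) : QB (fun _ => c) :=
  ⟨c, fun h hh => Nat.lt_two_pow_self.le.trans (Nat.pow_le_pow_right (by omega)
    (Nat.le_mul_of_pos_right _ (by positivity)))⟩

lemma QB.mul {f g : ℕ → ℕ} (hf : QB f) (hg : QB g) : QB (fun h => f h * g h) := by
  obtain ⟨C, hC⟩ := hf
  obtain ⟨C', hC'⟩ := hg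
  refine ⟨C + C', fun h hh => ?_⟩
  rw [add_mul, pow_add]
  exact Nat.mul_le_mul (hC h hh) (hC' h hh)

lemma QB.add {f g : ℕ → ℕ} (hf : QB f) (hg : QB g) : QB (fun h => f h + g h) := by
  obtain ⟨C, hC⟩ := hf
  obtain ⟨C', hC'⟩ := hg
  refine ⟨C + C' + 1, fun h hh => ?_⟩
  have h1 := hC h hh
  have h2 := hC' h hh
  have h3 : 2 ^ (C * h ^ 2) ≤ 2 ^ ((C + C') * h ^ 2) := Nat.pow_le_pow_right (by omega) (Nat.mul_le_mul_right _ (by omega))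
  have h4 : 2 ^ (C' * h ^ 2) ≤ 2 ^ ((C + C') * h ^ 2) := Nat.pow_le_pow_right (by omega) (Nat.mul_le_mul_right _ (by omega))
  have h5 : 2 ^ ((C + C') * h ^ 2 + 1) ≤ 2 ^ ((C + C' + 1) * h ^ 2) := Nat.pow_le_pow_right (by omega) (by
    have : 1 ≤ h ^ 2 := Nat.one_le_pow _ _ hh
    nlinarith)
  rw [pow_succ] at h5
  show f h + g h ≤ _
  omega

lemma QB.pow {f : ℕ → ℕ} (hf : QB f) (n : ℕ) : QB (fun h => f h ^ n) := by
  induction n with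
  | zero => simpa using QB.const 1
  | succ n ih => simpa only [pow_succ] using ih.mul hf

lemma QB.two_pow {e : ℕ → ℕ} (c : ℕ) (he : ∀ h, 1 ≤ h → e h ≤ c * h ^ 2) : QB (fun h => 2 ^ e h) :=
  ⟨c, fun h hh => Nat.pow_le_pow_right (by omega) (he h hh)⟩

lemma QB.mono {f g : ℕ → ℕ} (hg : QB g) (h : ∀ x, 1 ≤ x → f x ≤ g x) : QB f := by
  obtain ⟨C, hC⟩ := hg
  exact ⟨C, fun x hx => (h x hx).trans (hC x hx)⟩

def cc (m : ℕ) : ℕ := m * (2 * m + 9)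

lemma cc_bound (m h : ℕ) (hm : 1 ≤ m) (hh : 1 ≤ h) :
    (cc m * h * 2 ^ (2 * h + 1) + 1) ^ m < 2 ^ (cc m * h) := by
  have h1 : cc m < 2 ^ (2 * m + 4) := by
    have h2 : m < 2 ^ m := Nat.lt_two_pow_self
    have h3 : 2 * m + 9 < 2 ^ m * 16 := by omega
    calc cc m = m * (2 * m + 9) := rfl
      _ < 2 ^ m * (2 ^ m * 16) := Nat.mul_lt_mul'' h2 h3
      _ = _ := by rw [pow_add, two_mul, pow_add]; ring
  have h2 : h < 2 ^ h := Nat.lt_two_pow_self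
  have h3 : cc m * h * 2 ^ (2 * h + 1) + 1 < 2 ^ (2 * m + 4 + h + (2 * h + 1) + 1) := by
    have h4 : cc m * h < 2 ^ (2 * m + 4) * 2 ^ h := Nat.mul_lt_mul'' h1 h2
    have h5 : cc m * h * 2 ^ (2 * h + 1) < 2 ^ (2 * m + 4) * 2 ^ h * 2 ^ (2 * h + 1) :=
      Nat.mul_lt_mul_of_pos_right h4 (by positivity)
    rw [pow_succ _ (2 * m + 4 + h + (2 * h + 1)), pow_add 2 (2 * m + 4 + h), pow_add 2 (2 * m + 4)]
    omega
  calc _ < (2 ^ (2 * m + 4 + h + (2 * h + 1) + 1)) ^ m := Nat.pow_lt_pow_left h3 (by omega)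
    _ = 2 ^ ((2 * m + 4 + h + (2 * h + 1) + 1) * m) := by rw [pow_mul]
    _ ≤ _ := Nat.pow_le_pow_right (by omega) (by
      unfold cc
      rw [mul_comm _ m, mul_assoc]
      apply Nat.mul_le_mul_left
      nlinarith)

lemma QB_final (m : ℕ) :
    QB (fun h => stB m (2 ^ (2 * h + 1)) (cc m * h) (2 ^ (h * (h + 1) + h))) := by
  have hD : QB (fun h => 2 ^ (2 * h + 1)) := QB.two_pow 3 (fun h hh => by nlinarith)
  have hN1 : QB (fun h => 2 ^ (h * (h + 1) + h)) := QB.two_pow 3 (fun h hh => by nlinarith)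
  have hR : QB (fun h => cc m * h) := (QB.const (cc m)).mul
    (QB.mono (g := fun h => 2 ^ h) (QB.two_pow 1 (fun h hh => by nlinarith)) fun h _ => Nat.lt_two_pow_self.le)
  have hl : QB (fun h => lM m (2 ^ (2 * h + 1)) (cc m * h)) := by
    refine QB.mono (g := fun h => 2 ^ ((m + (2 * h + 1)) * (cc m * h)))
      (QB.two_pow ((m + 3) * cc m) ?_) ?_
    · intro h hh
      calc (m + (2 * h + 1)) * (cc m * h) ≤ ((m + 3) * h) * (cc m * h) :=
            Nat.mul_le_mul_right _ (by nlinarith)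
        _ = _ := by ring
    · intro h hh
      show (m * 2 ^ (2 * h + 1)) ^ (cc m * h) ≤ _
      rw [pow_mul 2 (m + (2 * h + 1))]
      apply Nat.pow_le_pow_left
      rw [pow_add 2 m]
      exact Nat.mul_le_mul_right _ Nat.lt_two_pow_self.le
  have hk : QB (fun h => kT m (2 ^ (2 * h + 1)) (cc m * h)) := by
    refine QB.mono (g := fun h => 2 ^ (((2 * h + 2) * m) * (cc m * h)))
      (QB.two_pow (4 * m * cc m) ?_) ?_
    · intro h hh
      calc ((2 * h + 2) * m) * (cc m * h) ≤ ((4 * h) * m) * (cc m * h) :=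
            Nat.mul_le_mul_right _ (Nat.mul_le_mul_right _ (by omega))
        _ = _ := by ring
    · intro h hh
      show ((2 ^ (2 * h + 1) + 1) ^ m) ^ (cc m * h) ≤ _
      rw [pow_mul 2 _ (cc m * h), pow_mul 2 _ m]
      apply Nat.pow_le_pow_left
      apply Nat.pow_le_pow_left
      rw [pow_succ 2 (2 * h + 1)]
      have : 1 ≤ 2 ^ (2 * h + 1) := Nat.one_le_two_pow
      omega
  have hb : QB (fun h => bB m (2 ^ (2 * h + 1)) (cc m * h) (2 ^ (h * (h + 1) + h))) :=
    ((hN1.add (((QB.const 2).mul hD).mul hD)).add (hR.mul hl)).add hl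
  have hn : QB (fun h => nN m (2 ^ (2 * h + 1)) (cc m * h) (2 ^ (h * (h + 1) + h))) :=
    (((hb.add ((hk.add (QB.const 1)).mul hl)).add ((QB.const m).mul hk)).add hk).add (QB.const 2)
  exact (((QB.const m).mul ((hn.add (QB.const 1)).mul (QB.const 2))).mul
    (((hn.add (QB.const 1)).pow m).mul ((hl.add (QB.const 1)).pow m))).add (QB.const 1)

end PK

/-- For every `m ≥ 1` there is a constant `C > 0` such that every CFG in
Chomsky normal form with `h ≥ 1` variables over a terminal alphabet of `m` letters admits
a Parikh equivalent DFA with at most `2^{C·h²}` states. -/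
theorem cnf_to_parikh_equivalent_dfa (m : ℕ) (hm : 1 ≤ m) :
    ∃ C : ℕ, 0 < C ∧
      ∀ h : ℕ, 1 ≤ h →
      ∀ G : ContextFreeGrammar (Fin m), IsCNF G →
      ∀ fG : Fintype G.NT, @Fintype.card G.NT fG = h →
      ∃ (σ : Type) (_ : Fintype σ) (B : DFA (Fin m) σ),
        Fintype.card σ ≤ 2 ^ (C * h ^ 2) ∧
        parikhImage B.accepts = parikhImage G.language := by
  obtain ⟨C, hC⟩ := PK.QB_final m
  refine ⟨C + 1, Nat.succ_pos _, ?_⟩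
  intro h hh G hG fG hcard
  have H := PK.semiOfGrammar G hG
  rw [hcard] at H
  obtain ⟨τ, ft, B, h1, h2⟩ := PK.main_finite H hm Nat.one_le_two_pow (PK.cc m * h)
    (PK.cc_bound m h hm hh) (by
      rw [hcard]
      exact Nat.le_mul_of_pos_left _ (Nat.mul_pos hm (by omega)))
  refine ⟨τ, ft, B, h1.trans ((hC h hh).trans (Nat.pow_le_pow_right (by omega) ?_)), h2⟩
  exact Nat.mul_le_mul_right _ (Nat.le_succ C)
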